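/- Let k, D ≥ 1 and let (X,T) be a ℤ^k-system with the marker property satisfying mdim(X) < D/2^{k+1}. Then there exists a ℤ^k-equivariant topological embedding of X into the shift action of ℤ^k on ([0,1]^{2D})^{ℤ^k}. -/

import Mathlib

/-!
The proof is a Baire category argument in `C(X, ℝ^{2D})`. For `ε > 0`, let `separatingMaps T (2D) ε`
be the set of those `g` for which `g (T^n x) = g (T^n y)` for all `n` forces `dist x y < ε`. It is
open by compactness. If it is dense for every `ε`, then some `g` lies in all of these sets for
`ε = 1, 1/2, 1/3, …`; composing the coordinates of `g` with the sigmoid `ℝ → [0,1]` and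
reading the result along orbits gives the embedding. Density is `exists_separating_perturbation`, where
the `2D` coordinates are split into two groups of `D`.

*Block partitions of unity* (`exists_block_cover`). The dimension hypothesis yields `N₀` with
`4 widim < D N₀^k`, that is, a partition of unity with few functions active at each point which
separates the `N₀`-blocks of orbits up to `ε`. A partition of unity at a point is a subdivision of
`[0,1]` into intervals, and the common refinement of the subdivisions belonging to the `J^k`
subblocks of a block of side `N = J N₀` has at most `J^k · widim + 1` nonempty intervals. Hence on
large blocks there are partitions of unity `h` with fine members and with
`4 #{v | h v x ≠ 0} ≤ D (N - b)^k` for any prescribed `b`.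

*Codes* (`code_finite_bad`). If every index `v` is assigned a code word in `ℝ^R`, then an arbitrarily
small multiple of a Gaussian matrix `2^{(r - κ_c)²}`, all of whose relevant minors are nonzero, makes
any `R` code words linearly independent. Therefore `∑ v, h v x • (word v)`, written over a block of
an orbit, determines the numbers `h v x`. Code words that are close to the given map `f` along the
block give a small perturbation of `f`.

*First `D` coordinates* (`exists_recognizable_markers`). Codes are written over the blocks that start
at markers. The Gaussian is compatible with translations, so a code and its translate by a small
nonzero vector form a generic system as well and never agree. Thus a marker function can be computed
from the perturbed map.

*Last `D` coordinates* (`exists_cell_weights`, `exists_separating_perturbation`). The marker function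
determines a continuous weighted Voronoi tiling of `ℤ^k`. Each tile is covered by cubes of side
`q + 1` of a grid attached to its marker, and moving the grid to mesh `q` contracts the tile, which
makes room along the boundary: the contracted cubes of side `q` are pairwise disjoint, even for
different markers. The code of the cube `(q + 1) i + [q + 1]^k` is written in the cube `q i + [q]^k`,
together with a code of the latter, which keeps the perturbation small. Comparing two points
involves four partitions of unity, whence the factor `4`. All of this is readable, so
points with the same readings lie in a common member of the partition of the block containing the
origin, hence are `ε`-close.
-/

open Set Filter
open scoped NNReal ENNReal Topology

/-- A continuous action of `ℤ^k` on a topological space. -/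
structure IsZkAction {k : ℕ} {X : Type*} [TopologicalSpace X]
    (T : (Fin k → ℤ) → X → X) : Prop where
  cont : ∀ n, Continuous (T n)
  map_zero : ∀ x, T 0 x = x
  map_add : ∀ m n x, T (m + n) x = T m (T n x)

/-- The marker property for a `ℤ^k`-action. -/
def MarkerProperty {k : ℕ} {X : Type*} [TopologicalSpace X]
    (T : (Fin k → ℤ) → X → X) : Prop :=
  ∀ F : Finset (Fin k → ℤ), ∃ U : Set X, IsOpen U ∧
    (⋃ n : Fin k → ℤ, T n '' U) = Set.univ ∧
    ∀ n ∈ F, n ≠ 0 → U ∩ T n '' U = ∅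

/-- `f` is an `ε`-embedding with respect to the (pseudo-)distance `ρ`:
every fiber of `f` has `ρ`-diameter `< ε`. -/
def IsEpsEmbedding {X Y : Type*} [TopologicalSpace X] [TopologicalSpace Y]
    (ρ : X → X → ℝ) (ε : ℝ) (f : X → Y) : Prop :=
  Continuous f ∧ ∀ x y, f x = f y → ρ x y < ε

/-- `widim_ε(X, ρ)`: the least `n` such that there is an `ε`-embedding of `X`
into a finite simplicial complex of dimension at most `n`. -/
noncomputable def widim (X : Type*) [TopologicalSpace X] (ρ : X → X → ℝ) (ε : ℝ) : ℕ :=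
  sInf {n : ℕ | ∃ (m : ℕ) (P : Geometry.SimplicialComplex ℝ (EuclideanSpace ℝ (Fin m))),
    P.faces.Finite ∧ (∀ s ∈ P.faces, s.card ≤ n + 1) ∧
    ∃ f : X → P.space, IsEpsEmbedding ρ ε f}

/-- The distance `ρ_{[N]}(x,y) = sup_{a ∈ {0,…,N-1}^k} ρ(T^a x, T^a y)`. -/
noncomputable def blockRho {k : ℕ} {X : Type*} (T : (Fin k → ℤ) → X → X)
    (ρ : X → X → ℝ) (N : ℕ) (x y : X) : ℝ :=
  ⨆ a : Fin k → Fin N, ρ (T (fun i => (a i : ℤ)) x) (T (fun i => (a i : ℤ)) y)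

/-- Mean dimension of a `ℤ^k`-system:
`mdim(X) = lim_{ε→0} lim_{N→∞} widim_ε(X, d_{[N]})/N^k`, where the limit in `N`
equals the infimum (subadditivity) and the limit in `ε` equals the supremum
(monotonicity). -/
noncomputable def mdim {k : ℕ} (X : Type*) [MetricSpace X]
    (T : (Fin k → ℤ) → X → X) : ℝ≥0∞ :=
  ⨆ (ε : ℝ) (_ : 0 < ε), ⨅ (N : ℕ) (_ : 1 ≤ N),
    (widim X (blockRho T dist N) ε : ℝ≥0∞) / (N : ℝ≥0∞) ^ k

/-! ### Generic linear codes -/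

/-- The matrix `2^{(r - κ_c)²}` is a Vandermonde matrix in the nodes `2^{-2 κ_c}`, with rescaled rows
and columns. -/
lemma gauss_det_ne_zero {q : ℕ} (κ : Fin q → ℤ) (hκ : Function.Injective κ) :
    (Matrix.of fun r c : Fin q => (2 : ℝ) ^ ((((r : ℕ) : ℤ) - κ c) ^ 2)).det ≠ 0 := by
  have key : (Matrix.of fun r c : Fin q => (2 : ℝ) ^ ((((r : ℕ) : ℤ) - κ c) ^ 2)) =
      Matrix.of fun r c : Fin q => (2 : ℝ) ^ (((r : ℕ) : ℤ) ^ 2) *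
        (Matrix.of fun r c : Fin q => (2 : ℝ) ^ (κ c ^ 2) *
          (Matrix.vandermonde fun c : Fin q => (2 : ℝ) ^ (-2 * κ c)).transpose r c) r c := by
    ext r c
    simp only [Matrix.of_apply, Matrix.transpose_apply, Matrix.vandermonde_apply]
    rw [← zpow_natCast, ← zpow_mul, ← zpow_add₀ two_ne_zero, ← zpow_add₀ two_ne_zero]
    congr 1
    ring
  rw [key, Matrix.det_mul_column, Matrix.det_mul_row, Matrix.det_transpose]
  refine mul_ne_zero (Finset.prod_ne_zero_iff.2 fun i _ => by positivity)
    (mul_ne_zero (Finset.prod_ne_zero_iff.2 fun i _ => by positivity) ?_)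
  rw [Matrix.det_vandermonde_ne_zero_iff]
  intro a b hab
  apply hκ
  have := zpow_right_injective₀ (a := (2:ℝ)) (by norm_num) (by norm_num) hab
  linarith

/-- For all but finitely many `t`, any `R` columns of the perturbed code matrix `A + t 2^{(r - κ_c)²}`
are linearly independent: each minor on the first rows is a polynomial in `t` whose leading
coefficient is a Gaussian determinant. -/
lemma code_finite_bad {C : Type*} [Fintype C] (R : ℕ) (A : C → Fin R → ℝ)
    (κ : C → ℤ) (hκ : Function.Injective κ) :
    {t : ℝ | ¬ ∀ z : C → ℝ, {c | z c ≠ 0}.ncard ≤ R →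
      (∀ r, ∑ c, z c * (A c r + t * (2 : ℝ) ^ ((((r : ℕ) : ℤ) - κ c) ^ 2)) = 0) →
      z = 0}.Finite := by
  classical
  let B : (S : {S : Finset C // S.card ≤ R}) → Matrix (Fin S.1.card) (Fin S.1.card) ℝ :=
    fun S => Matrix.of fun r c => A (S.1.equivFin.symm c) (Fin.castLE S.2 r)
  let E : (S : {S : Finset C // S.card ≤ R}) → Matrix (Fin S.1.card) (Fin S.1.card) ℝ :=
    fun S => Matrix.of fun r c => (2 : ℝ) ^ ((((r : ℕ) : ℤ) - κ (S.1.equivFin.symm c)) ^ 2)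
  have hfin : ∀ S, {t : ℝ | (t • E S + B S).det = 0}.Finite := by
    intro S
    let p : Polynomial ℝ := ((Polynomial.X : Polynomial ℝ) • (E S).map Polynomial.C +
      (B S).map Polynomial.C).det
    have hp : p ≠ 0 := by
      intro h0
      have h1 := Polynomial.coeff_det_X_add_C_card (E S) (B S)
      have h2 : (E S).det ≠ 0 := gauss_det_ne_zero _
        (hκ.comp (Subtype.val_injective.comp S.1.equivFin.symm.injective))
      apply h2
      rw [← h1]
      change p.coeff _ = 0
      rw [h0, Polynomial.coeff_zero]
    refine (Polynomial.finite_setOfPred_isRoot hp).subset fun t ht => ?_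
    have h3 : p.eval t = (t • E S + B S).det := by
      change (Polynomial.evalRingHom t) p = _
      rw [RingHom.map_det]
      congr 1
      ext i j
      simp
      ring
    change p.eval t = 0
    rw [h3]
    exact ht
  refine (Set.finite_iUnion hfin).subset ?_
  intro t ht
  simp only [Set.mem_ofPred_eq, not_forall] at ht
  obtain ⟨z, hz, hsum, hne⟩ := ht
  rw [Set.mem_iUnion]
  have hS : (Finset.univ.filter fun c => z c ≠ 0).card ≤ R := by
    rw [← Set.ncard_coe_finset]
    simpa using hz
  let S : {S : Finset C // S.card ≤ R} := ⟨Finset.univ.filter fun c => z c ≠ 0, hS⟩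
  refine ⟨S, ?_⟩
  by_contra hdet
  apply hne
  let u : Fin S.1.card → ℝ := fun i => z (S.1.equivFin.symm i)
  have hu : (t • E S + B S).mulVec u = 0 := by
    ext r
    rw [Pi.zero_apply, ← hsum (Fin.castLE S.2 r)]
    simp only [Matrix.mulVec, dotProduct]
    rw [← Finset.sum_subset (Finset.subset_univ S.1)]
    · rw [← Finset.sum_coe_sort S.1 (fun c => z c * (A c (Fin.castLE S.2 r) +
        t * (2 : ℝ) ^ ((((Fin.castLE S.2 r : Fin R) : ℕ) - κ c : ℤ) ^ 2))),
        ← Equiv.sum_comp S.1.equivFin.symm]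
      refine Finset.sum_congr rfl fun i _ => ?_
      simp [E, B, u]
      ring
    · intro c _ hc
      have : z c = 0 := by simpa [S] using hc
      simp [this]
  have hu0 := Matrix.eq_zero_of_mulVec_eq_zero hdet hu
  ext c
  by_contra hc
  have hcS : c ∈ S.1 := by simpa [S] using hc
  have := congrFun hu0 (S.1.equivFin ⟨c, hcS⟩)
  simp [u] at this
  exact hc this

/-- The set of exceptional parameters of `code_finite_bad`, with rows indexed by any finite type
which is numbered by `e`. -/
lemma code_finite_bad_equiv {C ι : Type*} [Fintype C] (R : ℕ) (e : ι ≃ Fin R) (A : C → ι → ℝ)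
    (κ : C → ℤ) (hκ : Function.Injective κ) :
    {t : ℝ | ¬ ∀ z : C → ℝ, {c | z c ≠ 0}.ncard ≤ R →
      (∀ r, ∑ c, z c * (A c r + t * (2 : ℝ) ^ ((((e r : ℕ) : ℤ) - κ c) ^ 2)) = 0) →
      z = 0}.Finite := by
  refine (code_finite_bad R (fun c r => A c (e.symm r)) κ hκ).subset ?_
  intro t ht h
  refine ht fun z hz hs => h z hz fun r => ?_
  have := hs (e.symm r)
  simpa using this

/-- Finitely many finite exceptional sets leave arbitrarily small positive parameters. -/
lemma exists_good_param {J : Type*} [Finite J] (bad : J → Set ℝ) (hb : ∀ j, (bad j).Finite)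
    {τ : ℝ} (hτ : 0 < τ) : ∃ t, 0 < t ∧ t < τ ∧ ∀ j, t ∉ bad j := by
  have h1 : (⋃ j, bad j).Finite := Set.finite_iUnion hb
  obtain ⟨t, ht, ht'⟩ := (Set.Ioo_infinite hτ).exists_notMem_finite h1
  exact ⟨t, ht.1, ht.2, fun j hj => ht' (Set.mem_iUnion.2 ⟨j, hj⟩)⟩

/-! ### Epsilon-embeddings and partitions of unity -/

/-- Barycentric coordinates of a map into a finite simplicial complex form a partition of unity that
determines the map. They are continuous because the realisation map is injective on the compact
set of coordinate vectors supported on faces. -/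
lemma exists_barycentric {X : Type*} [TopologicalSpace X] {m : ℕ}
    (P : Geometry.SimplicialComplex ℝ (EuclideanSpace ℝ (Fin m))) (hP : P.faces.Finite) (n : ℕ)
    (hn : ∀ s ∈ P.faces, s.card ≤ n + 1) (f : X → P.space) (hf : Continuous f) :
    ∃ (M : ℕ) (h : Fin M → X → ℝ), (∀ v, Continuous (h v)) ∧ (∀ v x, 0 ≤ h v x) ∧
      (∀ x, ∑ v, h v x = 1) ∧ (∀ x, {v | h v x ≠ 0}.ncard ≤ n + 1) ∧
      ∀ x y, (∀ v, h v x = h v y) → f x = f y := by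
  classical
  let V : Finset (EuclideanSpace ℝ (Fin m)) := hP.toFinset.biUnion id
  have hV : ∀ s ∈ P.faces, s ⊆ V := fun s hs =>
    Finset.subset_biUnion_of_mem id (hP.mem_toFinset.2 hs)
  let Λ : Set (V → ℝ) := stdSimplex ℝ V ∩ ⋃ s ∈ P.faces, {l | ∀ v : V, v.1 ∉ s → l v = 0}
  have hΛc : IsCompact Λ := by
    refine (isCompact_stdSimplex ℝ V).inter_right (hP.isClosed_biUnion fun s _ => ?_)
    have : {l : V → ℝ | ∀ v : V, v.1 ∉ s → l v = 0} =
        ⋂ (v : V) (_ : v.1 ∉ s), {l : V → ℝ | l v = 0} := by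
      ext l; simp
    rw [this]
    exact isClosed_iInter fun v => isClosed_iInter fun _ =>
      isClosed_eq (continuous_apply v) continuous_const
  -- the realisation map
  let β : (V → ℝ) → EuclideanSpace ℝ (Fin m) := fun l => ∑ v, l v • v.1
  have hβc : Continuous β := by
    refine continuous_finsetSum _ fun v _ => ?_
    exact (continuous_apply v).smul continuous_const
  -- sums over `V` reduce to sums over a face
  have hsum1 : ∀ s ∈ P.faces, ∀ l : V → ℝ, (∀ v : V, v.1 ∉ s → l v = 0) →
      ∃ w : EuclideanSpace ℝ (Fin m) → ℝ, (∀ v : V, w v.1 = l v) ∧ (∀ v, v ∉ s → w v = 0) ∧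
        ∑ v ∈ s, w v = ∑ v, l v ∧ ∑ v ∈ s, w v • v = β l := by
    intro s hs l hl
    let w : EuclideanSpace ℝ (Fin m) → ℝ := fun v => if hv : v ∈ V then l ⟨v, hv⟩ else 0
    have hw : ∀ v : V, w v.1 = l v := fun v => by simp [w]
    have hw0 : ∀ v, v ∉ s → w v = 0 := by
      intro v hv
      by_cases h : v ∈ V
      · rw [hw ⟨v, h⟩]; exact hl ⟨v, h⟩ hv
      · simp [w, h]
    refine ⟨w, hw, hw0, ?_, ?_⟩
    · rw [Finset.sum_subset (hV s hs) (fun v _ hv => hw0 v hv), ← Finset.sum_coe_sort V w]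
      exact Finset.sum_congr rfl fun v _ => hw v
    · rw [Finset.sum_subset (hV s hs) (fun v _ hv => by rw [hw0 v hv, zero_smul]),
        ← Finset.sum_coe_sort V (fun v => w v • v)]
      exact Finset.sum_congr rfl fun v _ => by rw [hw v]
  have huniq : ∀ s ∈ P.faces, ∀ w w' : EuclideanSpace ℝ (Fin m) → ℝ,
      ∑ v ∈ s, w v = ∑ v ∈ s, w' v → ∑ v ∈ s, w v • v = ∑ v ∈ s, w' v • v →
      ∀ v ∈ s, w v = w' v := by
    intro s hs w w' h1 h2 v hv
    have := (affineIndependent_iff.1 (P.indep hs)) Finset.univ (fun v => w v.1 - w' v.1)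
      (by rw [Finset.sum_coe_sort s (fun v => w v - w' v), Finset.sum_sub_distrib, h1, sub_self])
      (by
        rw [Finset.sum_coe_sort s (fun v => (w v - w' v) • v)]
        simp only [sub_smul]
        rw [Finset.sum_sub_distrib, h2, sub_self]) ⟨v, hv⟩ (Finset.mem_univ _)
    exact sub_eq_zero.1 this
  have hβmem : ∀ l ∈ Λ, β l ∈ P.space := by
    rintro l ⟨⟨hl0, hl1⟩, hl2⟩
    simp only [Set.mem_iUnion] at hl2
    obtain ⟨s, hs, hls⟩ := hl2
    obtain ⟨w, hw, hw0, hws, hwb⟩ := hsum1 s hs l hls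
    refine P.mem_space_iff.2 ⟨s, hs, ?_⟩
    rw [Finset.mem_convexHull']
    refine ⟨w, fun v hv => ?_, hws.trans hl1, hwb⟩
    rw [hw ⟨v, hV s hs hv⟩]
    exact hl0 _
  have hβinj : ∀ l ∈ Λ, ∀ l' ∈ Λ, β l = β l' → l = l' := by
    rintro l ⟨⟨hl0, hl1⟩, hl2⟩ l' ⟨⟨hl0', hl1'⟩, hl2'⟩ heq
    simp only [Set.mem_iUnion] at hl2 hl2'
    obtain ⟨s, hs, hls⟩ := hl2
    obtain ⟨s', hs', hls'⟩ := hl2'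
    obtain ⟨w, hw, hw0, hws, hwb⟩ := hsum1 s hs l hls
    obtain ⟨w', hw', hw0', hws', hwb'⟩ := hsum1 s' hs' l' hls'
    have h1 : β l ∈ convexHull ℝ (s : Set (EuclideanSpace ℝ (Fin m))) := by
      rw [Finset.mem_convexHull']
      exact ⟨w, fun v hv => by rw [hw ⟨v, hV s hs hv⟩]; exact hl0 _, hws.trans hl1, hwb⟩
    have h2 : β l ∈ convexHull ℝ (s' : Set (EuclideanSpace ℝ (Fin m))) := by
      rw [heq, Finset.mem_convexHull']
      exact ⟨w', fun v hv => by rw [hw' ⟨v, hV s' hs' hv⟩]; exact hl0' _, hws'.trans hl1', hwb'⟩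
    have h3 := P.inter_subset_convexHull hs hs' ⟨h1, h2⟩
    rw [← Finset.coe_inter, Finset.mem_convexHull'] at h3
    obtain ⟨u, -, hu1, hub⟩ := h3
    let u' : EuclideanSpace ℝ (Fin m) → ℝ := fun v => if v ∈ s ∩ s' then u v else 0
    have hu' : ∀ r, s ∩ s' ⊆ r → ∑ v ∈ r, u' v = 1 ∧ ∑ v ∈ r, u' v • v = β l := by
      intro r hr
      rw [← Finset.sum_subset hr (fun v _ hv => by simp only [u', if_neg hv]),
        ← Finset.sum_subset hr (fun v _ hv => by simp only [u', if_neg hv, zero_smul])]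
      rw [← hu1, ← hub]
      constructor
      · exact Finset.sum_congr rfl fun v hv => by simp only [u', if_pos hv]
      · exact Finset.sum_congr rfl fun v hv => by simp only [u', if_pos hv]
    have e1 := huniq s hs w u' (by rw [hws, hl1, (hu' s Finset.inter_subset_left).1])
      (by rw [hwb, (hu' s Finset.inter_subset_left).2])
    have e2 := huniq s' hs' w' u' (by rw [hws', hl1', (hu' s' Finset.inter_subset_right).1])
      (by rw [hwb', (hu' s' Finset.inter_subset_right).2, heq])
    have e1' : ∀ v, w v = u' v := fun v => by
      by_cases hv : v ∈ s
      · exact e1 v hv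
      · rw [hw0 v hv]; simp [u', hv]
    have e2' : ∀ v, w' v = u' v := fun v => by
      by_cases hv : v ∈ s'
      · exact e2 v hv
      · rw [hw0' v hv]; simp [u', hv]
    ext v
    rw [← hw v, ← hw' v, e1', e2']
  have hβsurj : ∀ p ∈ P.space, ∃ l ∈ Λ, β l = p := by
    intro p hp
    obtain ⟨s, hs, hps⟩ := P.mem_space_iff.1 hp
    rw [Finset.mem_convexHull'] at hps
    obtain ⟨w, hw0, hw1, hwb⟩ := hps
    let l : V → ℝ := fun v => if v.1 ∈ s then w v.1 else 0
    have hl : ∀ v : V, v.1 ∉ s → l v = 0 := fun v hv => by simp [l, hv]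
    obtain ⟨w', hw', hw0', hws', hwb'⟩ := hsum1 s hs l hl
    have hww : ∀ v ∈ s, w' v = w v := fun v hv => by
      rw [hw' ⟨v, hV s hs hv⟩]; simp [l, hv]
    refine ⟨l, ⟨⟨fun v => ?_, ?_⟩, ?_⟩, ?_⟩
    · by_cases hv : v.1 ∈ s
      · simpa [l, hv] using hw0 _ hv
      · simp [l, hv]
    · rw [← hws', ← hw1]; exact Finset.sum_congr rfl hww
    · simp only [Set.mem_iUnion]; exact ⟨s, hs, hl⟩
    · rw [← hwb', ← hwb]; exact Finset.sum_congr rfl fun v hv => by rw [hww v hv]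
  let β' : Λ → P.space := fun l => ⟨β l.1, hβmem l.1 l.2⟩
  have hβ'c : Continuous β' := (hβc.comp continuous_subtype_val).subtype_mk _
  have hβ'b : Function.Bijective β' := by
    constructor
    · intro l l' h
      exact Subtype.ext (hβinj l.1 l.2 l'.1 l'.2 (congrArg Subtype.val h))
    · rintro ⟨p, hp⟩
      obtain ⟨l, hl, rfl⟩ := hβsurj p hp
      exact ⟨⟨l, hl⟩, rfl⟩
  have : CompactSpace Λ := isCompact_iff_compactSpace.1 hΛc
  have hc' : Continuous (Equiv.ofBijective β' hβ'b) := hβ'c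
  let H : Λ ≃ₜ P.space := hc'.homeoOfEquivCompactToT2
  let e := V.equivFin
  refine ⟨V.card, fun v x => (H.symm (f x)).1 (e.symm v), fun v => ?_, fun v x => ?_, fun x => ?_,
    fun x => ?_, fun x y hxy => ?_⟩
  · exact (continuous_apply _).comp (continuous_subtype_val.comp (H.symm.continuous.comp hf))
  · exact (H.symm (f x)).2.1.1 _
  · rw [Equiv.sum_comp e.symm (fun v => (H.symm (f x)).1 v)]
    exact (H.symm (f x)).2.1.2
  · have hl2 := (H.symm (f x)).2.2
    simp only [Set.mem_iUnion] at hl2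
    obtain ⟨s, hs, hls⟩ := hl2
    refine le_trans ?_ (hn s hs)
    refine le_trans ?_ (Set.ncard_coe_finset s).le
    refine Set.ncard_le_ncard_of_injOn (fun v => (e.symm v).1) ?_ ?_ (Finset.finite_toSet s)
    · intro v hv
      by_contra hvs
      exact hv (hls _ hvs)
    · exact (Subtype.val_injective.comp e.symm.injective).injOn
  · apply H.symm.injective
    apply Subtype.ext
    ext v
    have := hxy (e v)
    simpa using this

/-- The set whose infimum is `widim` is nonempty: a partition of unity subordinate to a finite cover
by `ρ`-small sets maps `X` to a simplex. -/
lemma exists_complex_embedding {X : Type*} [TopologicalSpace X] [CompactSpace X] [NormalSpace X]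
    (ρ : X → X → ℝ) (ε : ℝ)
    (H : ∀ x, ∃ U : Set X, IsOpen U ∧ x ∈ U ∧ ∀ y ∈ U, ∀ z ∈ U, ρ y z < ε) :
    {n : ℕ | ∃ (m : ℕ) (P : Geometry.SimplicialComplex ℝ (EuclideanSpace ℝ (Fin m))),
      P.faces.Finite ∧ (∀ s ∈ P.faces, s.card ≤ n + 1) ∧
      ∃ f : X → P.space, IsEpsEmbedding ρ ε f}.Nonempty := by
  classical
  choose U hUo hxU hU using H
  obtain ⟨t, ht⟩ := isCompact_univ.elim_finite_subcover U hUo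
    (fun x _ => Set.mem_iUnion.2 ⟨x, hxU x⟩)
  let m := t.card
  let W : Fin m → Set X := fun i => U (t.equivFin.symm i).1
  have hWcov : (Set.univ : Set X) ⊆ ⋃ i, W i := by
    intro x hx
    have := ht hx
    simp only [Set.mem_iUnion] at this
    obtain ⟨y, hy, hxy⟩ := this
    exact Set.mem_iUnion.2 ⟨t.equivFin ⟨y, hy⟩, by simpa [W] using hxy⟩
  obtain ⟨p, hp⟩ := PartitionOfUnity.exists_isSubordinate_of_locallyFinite isClosed_univ W
    (fun i => hUo _) (locallyFinite_of_finite W) hWcov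
  let b : Fin m → EuclideanSpace ℝ (Fin m) := EuclideanSpace.basisFun (Fin m) ℝ
  have hb : LinearIndependent ℝ b :=
    (EuclideanSpace.basisFun (Fin m) ℝ).orthonormal.linearIndependent
  have hbi : AffineIndependent ℝ (Subtype.val : Set.range b → EuclideanSpace ℝ (Fin m)) :=
    hb.affineIndependent.range
  let Vs : Finset (EuclideanSpace ℝ (Fin m)) := Finset.univ.image b
  have hVs : (Vs : Set (EuclideanSpace ℝ (Fin m))) = Set.range b := by simp [Vs]
  let P : Geometry.SimplicialComplex ℝ (EuclideanSpace ℝ (Fin m)) :=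
    { faces := {s | s ⊆ Vs ∧ s.Nonempty}
      isRelLowerSet_faces := by
        intro s hs
        exact ⟨hs.2, fun r hr hr' => ⟨hr.trans hs.1, hr'⟩⟩
      indep := by
        intro s hs
        exact hbi.mono (by rw [← hVs]; exact_mod_cast hs.1)
      inter_subset_convexHull := by
        intro s r hs hr
        have : AffineIndependent ℝ (Subtype.val : Vs → EuclideanSpace ℝ (Fin m)) :=
          hbi.mono (by rw [← hVs])
        exact (this.convexHull_inter hs.1 hr.1).symm.subset }
  have hPf : P.faces = {s | s ⊆ Vs ∧ s.Nonempty} := rfl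
  have hsum : ∀ x, ∑ i, p i x = 1 := by
    intro x
    have := p.sum_eq_one (Set.mem_univ x)
    rwa [finsum_eq_sum_of_fintype] at this
  let g : X → EuclideanSpace ℝ (Fin m) := fun x => WithLp.toLp 2 (fun i => p i x)
  have hg : Continuous g :=
    (PiLp.continuous_toLp 2 _).comp (continuous_pi fun i => (p i).continuous)
  have hgm : ∀ x, g x ∈ P.space := by
    intro x
    have hne : Vs.Nonempty := by
      by_contra h
      have hm : m = 0 := by
        have : (Finset.univ : Finset (Fin m)) = ∅ := by
          simpa [Vs, Finset.not_nonempty_iff_eq_empty] using h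
        simpa using congrArg Finset.card this
      have h1 := hsum x
      have : IsEmpty (Fin m) := by rw [hm]; infer_instance
      rw [Finset.univ_eq_empty, Finset.sum_empty] at h1
      exact zero_ne_one h1
    refine P.mem_space_iff.2 ⟨Vs, ⟨subset_rfl, hne⟩, ?_⟩
    have : g x = ∑ i, p i x • b i := by
      have := (EuclideanSpace.basisFun (Fin m) ℝ).sum_repr (g x)
      rw [← this]
      simp [g, b]
    rw [this, hVs]
    exact (convex_convexHull ℝ _).sum_mem (fun i _ => p.nonneg i x) (hsum x)
      (fun i _ => subset_convexHull ℝ _ (Set.mem_range_self i))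
  refine ⟨m, m, P, ?_, ?_, fun x => ⟨g x, hgm x⟩, hg.subtype_mk _, ?_⟩
  · rw [hPf]
    exact (Vs.powerset.finite_toSet).subset fun s hs => by simpa using hs.1
  · intro s hs
    calc s.card ≤ Vs.card := Finset.card_le_card hs.1
      _ ≤ Finset.card (Finset.univ : Finset (Fin m)) := Finset.card_image_le
      _ ≤ m + 1 := by simp
  · intro x y hxy
    have hpxy : ∀ i, p i x = p i y := by
      intro i
      have h1 : g x = g y := congrArg Subtype.val hxy
      have := congrArg (fun z : EuclideanSpace ℝ (Fin m) => z i) h1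
      simpa [g] using this
    have : ∃ i, p i x ≠ 0 := by
      by_contra! h
      have := hsum x
      simp [h] at this
    obtain ⟨i, hi⟩ := this
    have hm : ∀ z, p i z ≠ 0 → z ∈ W i := fun z hz => hp i (subset_tsupport _ hz)
    exact hU _ x (hm x hi) y (hm y (by rwa [← hpxy i]))

/-- The value `widim` is attained, by a partition of unity in place of a simplicial complex. -/
lemma widim_spec {k : ℕ} {X : Type*} [MetricSpace X] [CompactSpace X]
    (T : (Fin k → ℤ) → X → X) (hT : IsZkAction T) (N : ℕ) (hN : 1 ≤ N) {ε : ℝ} (hε : 0 < ε) :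
    ∃ (M : ℕ) (h : Fin M → X → ℝ), (∀ v, Continuous (h v)) ∧ (∀ v x, 0 ≤ h v x) ∧
      (∀ x, ∑ v, h v x = 1) ∧
      (∀ x, {v | h v x ≠ 0}.ncard ≤ widim X (blockRho T dist N) ε + 1) ∧
      ∀ x y, (∀ v, h v x = h v y) → ∀ a : Fin k → Fin N,
        dist (T (fun i => (a i : ℤ)) x) (T (fun i => (a i : ℤ)) y) < ε := by
  have : Nonempty (Fin N) := ⟨⟨0, hN⟩⟩
  have hne := exists_complex_embedding (blockRho T dist N) ε (by
    intro x
    refine ⟨⋂ a : Fin k → Fin N, (T (fun i => (a i : ℤ))) ⁻¹'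
      Metric.ball (T (fun i => (a i : ℤ)) x) (ε / 2), ?_, ?_, ?_⟩
    · exact isOpen_iInter_of_finite fun a => Metric.isOpen_ball.preimage (hT.cont _)
    · exact Set.mem_iInter.2 fun a => Metric.mem_ball_self (by linarith)
    · intro y hy z hz
      obtain ⟨a, ha⟩ := exists_eq_ciSup_of_finite (f := fun a : Fin k → Fin N =>
        dist (T (fun i => (a i : ℤ)) y) (T (fun i => (a i : ℤ)) z))
      unfold blockRho
      rw [← ha]
      have h1 := Metric.mem_ball.1 (Set.mem_iInter.1 hy a)
      have h2 := Metric.mem_ball.1 (Set.mem_iInter.1 hz a)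
      linarith [dist_triangle_right (T (fun i => (a i : ℤ)) y) (T (fun i => (a i : ℤ)) z)
        (T (fun i => (a i : ℤ)) x)])
  have hmem := Nat.sInf_mem hne
  obtain ⟨m, P, hP, hPn, f, hf, hfe⟩ := hmem
  obtain ⟨M, h, h1, h2, h3, h4, h5⟩ := exists_barycentric P hP _ hPn f hf
  refine ⟨M, h, h1, h2, h3, h4, fun x y hxy a => lt_of_le_of_lt ?_ (hfe x y (h5 x y hxy))⟩
  exact le_ciSup (f := fun a : Fin k → Fin N =>
        dist (T (fun i => (a i : ℤ)) x) (T (fun i => (a i : ℤ)) y)) (Set.finite_range _).bddAbove a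

/-! ### Common refinements of partitions of the unit interval -/

/-- The length of the interval `⋂ q, [G q (w q), G q (w q + 1))`. -/
noncomputable def wordLength {Q : Type*} [Fintype Q] [Nonempty Q] {M : ℕ}
    (G : Q → ℕ → ℝ) (w : Q → Fin M) : ℝ :=
  max 0 (Finset.univ.inf' Finset.univ_nonempty (fun q => G q (w q + 1)) -
    Finset.univ.sup' Finset.univ_nonempty (fun q => G q (w q)))

lemma mem_Ico_unique {Q : Type*} {M : ℕ} {G : Q → ℕ → ℝ} (hmono : ∀ q, Monotone (G q))
    {w w' : Q → Fin M} {c : ℝ}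
    (h : ∀ q, c ∈ Set.Ico (G q (w q)) (G q (w q + 1)))
    (h' : ∀ q, c ∈ Set.Ico (G q (w' q)) (G q (w' q + 1))) : w = w' := by
  have key : ∀ (u u' : Q → Fin M), (∀ q, c ∈ Set.Ico (G q (u q)) (G q (u q + 1))) →
      (∀ q, c ∈ Set.Ico (G q (u' q)) (G q (u' q + 1))) → ∀ q, (u q : ℕ) ≤ u' q := by
    intro u u' h h' q
    by_contra! hlt
    have h1 : G q (u' q + 1) ≤ G q (u q) := hmono q (by omega)
    have h2 := (h q).1
    have h3 := (h' q).2
    linarith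
  ext q
  exact le_antisymm (key w w' h h' q) (key w' w h' h q)

section WordLength

variable {Q : Type*} [Fintype Q] [Nonempty Q] {M : ℕ} {G : Q → ℕ → ℝ}

lemma wordLength_nonneg (w : Q → Fin M) : 0 ≤ wordLength G w := le_max_left _ _

lemma wordLength_ne_zero_iff {w : Q → Fin M} :
    wordLength G w ≠ 0 ↔ ∀ q q', G q (w q) < G q' (w q' + 1) := by
  have h : wordLength G w ≠ 0 ↔ Finset.univ.sup' Finset.univ_nonempty (fun q => G q (w q)) <
      Finset.univ.inf' Finset.univ_nonempty (fun q => G q (w q + 1)) := by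
    unfold wordLength
    constructor
    · intro h
      by_contra! h'
      exact h (max_eq_left (by linarith))
    · intro h
      rw [max_eq_right (by linarith)]
      linarith
  rw [h]
  simp only [Finset.sup'_lt_iff, Finset.lt_inf'_iff, Finset.mem_univ, true_imp_iff]
  exact forall_comm

/-- The intervals of the words partition `[0,1)`, so their lengths add up to `1`. -/
lemma sum_wordLength [DecidableEq Q] (hmono : ∀ q, Monotone (G q)) (h0 : ∀ q, G q 0 = 0)
    (h1 : ∀ q, G q M = 1) :
    ∑ w : Q → Fin M, wordLength G w = 1 := by
  let I : (Q → Fin M) → Set ℝ := fun w => ⋂ q, Set.Ico (G q (w q)) (G q (w q + 1))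
  have hI : ∀ w, I w = Set.Ico (Finset.univ.sup' Finset.univ_nonempty (fun q => G q (w q)))
      (Finset.univ.inf' Finset.univ_nonempty (fun q => G q (w q + 1))) := by
    intro w
    ext c
    simp only [I, Set.mem_iInter, Set.mem_Ico, Finset.sup'_le_iff, Finset.lt_inf'_iff,
      Finset.mem_univ, true_imp_iff]
    exact ⟨fun h => ⟨fun q => (h q).1, fun q => (h q).2⟩, fun h q => ⟨h.1 q, h.2 q⟩⟩
  have hvol : ∀ w, MeasureTheory.volume (I w) = ENNReal.ofReal (wordLength G w) := by
    intro w
    rw [hI, Real.volume_Ico]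
    unfold wordLength
    rcases le_total 0 (Finset.univ.inf' Finset.univ_nonempty (fun q => G q (w q + 1)) -
      Finset.univ.sup' Finset.univ_nonempty (fun q => G q (w q))) with h | h
    · rw [max_eq_right h]
    · rw [max_eq_left h, ENNReal.ofReal_of_nonpos h, ENNReal.ofReal_zero]
  have hdisj : Pairwise (Function.onFun Disjoint I) := by
    intro w w' hne
    rw [Function.onFun, Set.disjoint_left]
    intro c hc hc'
    exact hne (mem_Ico_unique hmono (fun q => Set.mem_iInter.1 hc q)
      (fun q => Set.mem_iInter.1 hc' q))
  have hU : (⋃ w, I w) = Set.Ico 0 1 := by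
    ext c
    simp only [Set.mem_iUnion]
    constructor
    · rintro ⟨w, hw⟩
      obtain ⟨q⟩ := ‹Nonempty Q›
      have hq := Set.mem_iInter.1 hw q
      constructor
      · rw [← h0 q]; exact (hmono q (Nat.zero_le _)).trans hq.1
      · rw [← h1 q]; exact hq.2.trans_le (hmono q (w q).2)
    · intro hc
      have : ∀ q, ∃ v : Fin M, c ∈ Set.Ico (G q v) (G q (v + 1)) := by
        intro q
        have hex : ∃ n, c < G q n := ⟨M, by rw [h1]; exact hc.2⟩
        have hn := Nat.find_spec hex
        have hpos : Nat.find hex ≠ 0 := by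
          intro h
          rw [h, h0] at hn
          exact absurd hc.1 (not_le.2 hn)
        have hle : Nat.find hex ≤ M := Nat.find_min' hex (by rw [h1]; exact hc.2)
        refine ⟨⟨Nat.find hex - 1, by omega⟩, ?_, ?_⟩
        · exact not_lt.1 (Nat.find_min hex (m := Nat.find hex - 1) (by omega))
        · have : Nat.find hex - 1 + 1 = Nat.find hex := by omega
          simpa [this] using hn
      choose w hw using this
      exact ⟨w, Set.mem_iInter.2 hw⟩
  have hmeas : ∀ w, MeasurableSet (I w) := fun w => by rw [hI]; exact measurableSet_Ico
  have h2 := MeasureTheory.measure_iUnion (μ := MeasureTheory.volume) hdisj hmeas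
  rw [hU, tsum_fintype, Real.volume_Ico] at h2
  simp only [hvol] at h2
  rw [← ENNReal.ofReal_sum_of_nonneg (fun w _ => wordLength_nonneg w)] at h2
  have h3 := (ENNReal.ofReal_eq_ofReal_iff (by norm_num)
    (Finset.sum_nonneg fun w _ => wordLength_nonneg w)).1 h2
  rw [sub_zero] at h3
  exact h3.symm

/-- The number of nonempty intervals of a common refinement is additive in the number of division
points, because the left endpoint of such an interval is `0` or a division point. -/
lemma ncard_wordLength_le (hmono : ∀ q, Monotone (G q)) (h0 : ∀ q, G q 0 = 0)
    (h1 : ∀ q, G q M = 1) (S : Finset ℝ)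
    (hS : ∀ q v, G q v ∈ Set.Ioo (0 : ℝ) 1 → G q v ∈ S) :
    {w : Q → Fin M | wordLength G w ≠ 0}.ncard ≤ S.card + 1 := by
  classical
  have hge : ∀ q v, 0 ≤ G q v := fun q v => by rw [← h0 q]; exact hmono q (Nat.zero_le _)
  calc _ ≤ ((insert 0 S : Finset ℝ) : Set ℝ).ncard := ?_
    _ = (insert 0 S : Finset ℝ).card := Set.ncard_coe_finset _
    _ ≤ S.card + 1 := Finset.card_insert_le _ _
  refine Set.ncard_le_ncard_of_injOn
    (fun w => Finset.univ.sup' Finset.univ_nonempty (fun q => G q (w q))) ?_ ?_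
    (Finset.finite_toSet _)
  · intro w hw
    have hw' := wordLength_ne_zero_iff.1 hw
    obtain ⟨q, -, hq⟩ := Finset.exists_mem_eq_sup' (Finset.univ_nonempty (α := Q))
      (fun q => G q (w q))
    simp only [hq, Finset.coe_insert, Set.mem_insert_iff, Finset.mem_coe]
    rcases (hge q (w q)).eq_or_lt with h | h
    · exact Or.inl h.symm
    · right
      refine hS q _ ⟨h, ?_⟩
      calc G q (w q) < G q (w q + 1) := hw' q q
        _ ≤ G q M := hmono q (w q).2
        _ = 1 := h1 q
  · intro w hw w' hw' heq
    simp only at heq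
    have key : ∀ u : Q → Fin M, wordLength G u ≠ 0 → ∀ q,
        Finset.univ.sup' Finset.univ_nonempty (fun q => G q (u q)) ∈
          Set.Ico (G q (u q)) (G q (u q + 1)) := by
      intro u hu q
      refine ⟨Finset.le_sup' (fun q => G q (u q)) (Finset.mem_univ q), ?_⟩
      rw [Finset.sup'_lt_iff]
      exact fun q' _ => wordLength_ne_zero_iff.1 hu q' q
    exact mem_Ico_unique hmono (key w hw) (fun q => by rw [heq]; exact key w' hw' q)

end WordLength

/-- Truncation of a real number to `[0,1]`. -/
noncomputable def clamp (x : ℝ) : ℝ := max 0 (min 1 x)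

lemma clamp_nonneg (x : ℝ) : 0 ≤ clamp x := le_max_left _ _
lemma clamp_le_one (x : ℝ) : clamp x ≤ 1 := max_le zero_le_one (min_le_left _ _)
lemma clamp_of_nonpos {x : ℝ} (h : x ≤ 0) : clamp x = 0 :=
  max_eq_left ((min_le_right _ _).trans h)
lemma clamp_of_one_le {x : ℝ} (h : 1 ≤ x) : clamp x = 1 := by
  rw [clamp, min_eq_left h, max_eq_right zero_le_one]
lemma clamp_mono : Monotone clamp := fun _ _ h => max_le_max le_rfl (min_le_min le_rfl h)
lemma continuous_clamp : Continuous clamp := by unfold clamp; fun_prop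
lemma clamp_mem_Ioo {x : ℝ} (h : clamp x ∈ Set.Ioo (0 : ℝ) 1) : clamp x = x := by
  have h1 : 0 < x := by
    by_contra! h'
    rw [clamp_of_nonpos h'] at h
    exact lt_irrefl _ h.1
  have h2 : x < 1 := by
    by_contra! h'
    rw [clamp_of_one_le h'] at h
    exact lt_irrefl _ h.2
  rw [clamp, min_eq_right h2.le, max_eq_right h1.le]

/-- Cumulative sums `F v = ∑_{u < v} h u`. -/
noncomputable def cumSum {M : ℕ} (h : Fin M → ℝ) (v : ℕ) : ℝ :=
  ∑ u : Fin M, if (u : ℕ) < v then h u else 0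

section CumSum

variable {M : ℕ} {h : Fin M → ℝ}

lemma cumSum_zero : cumSum h 0 = 0 := by simp [cumSum]

lemma cumSum_of_le {v : ℕ} (hv : M ≤ v) : cumSum h v = ∑ u, h u :=
  Finset.sum_congr rfl fun u _ => if_pos (u.2.trans_le hv)

lemma cumSum_mono (h0 : ∀ v, 0 ≤ h v) : Monotone (cumSum h) := by
  intro a b hab
  refine Finset.sum_le_sum fun u _ => ?_
  by_cases h1 : (u : ℕ) < a
  · rw [if_pos h1, if_pos (h1.trans_le hab)]
  · rw [if_neg h1]
    split_ifs
    · exact h0 u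
    · exact le_rfl

lemma cumSum_succ (v : Fin M) : cumSum h (v + 1) = cumSum h v + h v := by
  have : h v = ∑ u : Fin M, if u = v then h u else 0 := by simp
  rw [this, cumSum, cumSum, ← Finset.sum_add_distrib]
  refine Finset.sum_congr rfl fun u _ => ?_
  rcases lt_trichotomy (u : ℕ) v with h1 | h1 | h1
  · simp [h1, (Nat.lt_succ_of_lt h1), Fin.ext_iff, h1.ne]
  · have : u = v := Fin.ext h1
    simp [this]
  · have h2 : ¬ ((u : ℕ) < v + 1) := by omega
    have h3 : ¬ ((u : ℕ) < v) := by omega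
    simp [h1.ne', h2, h3, Fin.ext_iff]

/-- Among the cumulative sums of a probability vector with at most `n + 1` nonzero entries, at most
`n` values lie strictly between `0` and `1`. -/
lemma exists_cumSum_values (h1 : ∑ v, h v = 1) {n : ℕ}
    (hn : {v | h v ≠ 0}.ncard ≤ n + 1) :
    ∃ S : Finset ℝ, S.card ≤ n ∧ ∀ v, cumSum h v ∈ Set.Ioo (0 : ℝ) 1 → cumSum h v ∈ S := by
  classical
  let S0 : Finset ℝ := (Finset.univ.filter fun v => h v ≠ 0).image fun v : Fin M => cumSum h (v + 1)
  have hS0 : ∀ v, 0 < cumSum h v → cumSum h v ∈ S0 := by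
    intro v
    induction v with
    | zero => intro hv; rw [cumSum_zero] at hv; exact absurd hv (lt_irrefl _)
    | succ v ih =>
      intro hv
      by_cases hvM : v < M
      · by_cases hz : h ⟨v, hvM⟩ = 0
        · have := cumSum_succ (h := h) ⟨v, hvM⟩
          simp only [hz, add_zero] at this
          rw [this] at hv ⊢
          exact ih hv
        · exact Finset.mem_image.2 ⟨⟨v, hvM⟩, by simpa using hz, rfl⟩
      · rw [cumSum_of_le (by omega)] at hv ⊢
        rw [← cumSum_of_le (not_lt.1 hvM)] at hv ⊢
        exact ih hv
  have h1mem : (1 : ℝ) ∈ S0 := by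
    have := hS0 M (by rw [cumSum_of_le le_rfl, h1]; norm_num)
    rwa [cumSum_of_le le_rfl, h1] at this
  refine ⟨S0.erase 1, ?_, fun v hv => Finset.mem_erase.2 ⟨hv.2.ne, hS0 v hv.1⟩⟩
  rw [Finset.card_erase_of_mem h1mem]
  have : S0.card ≤ n + 1 := by
    refine Finset.card_image_le.trans ?_
    rw [← Set.ncard_coe_finset]
    simpa using hn
  omega

end CumSum

/-! ### Partitions of unity on large blocks -/

/-- Arithmetic for `J^k` subblocks of side `N0`: the strict inequality for `N0` has room for both the
constant and the loss `b` in the side length once `J` is large, by the Bernoulli inequality. -/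
lemma block_numerics {k D n0 N0 b : ℕ} (hk : 1 ≤ k) (hN0 : 1 ≤ N0)
    (h : 4 * n0 < D * N0 ^ k) {J : ℕ} (hJ : D * k * b * N0 ^ (k - 1) + 4 ≤ J)
    (hb : b < N0 * J) : 4 * (J ^ k * n0 + 1) ≤ D * (N0 * J - b) ^ k := by
  obtain ⟨l, rfl⟩ : ∃ l, k = l + 1 := ⟨k - 1, by omega⟩
  simp only [Nat.add_sub_cancel] at hJ
  have hJ1 : 1 ≤ J := by omega
  have hpos : (0 : ℝ) < N0 * J := by
    have : 0 < N0 * J := by omega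
    exact_mod_cast this
  have hB : ((N0 : ℝ) * J) ^ (l + 1) - (l + 1) * b * (N0 * J) ^ l ≤ (N0 * J - b : ℝ) ^ (l + 1) := by
    have h1 := one_add_mul_le_pow (a := -((b : ℝ) / (N0 * J))) (by
      have : (b : ℝ) / (N0 * J) ≤ 1 := by
        rw [div_le_one hpos]; exact_mod_cast hb.le
      linarith) (l + 1)
    have h2 : (N0 * J - b : ℝ) = (N0 * J) * (1 + -((b : ℝ) / (N0 * J))) := by
      field_simp
      ring
    rw [h2, mul_pow (_ * _) (1 + _)]
    calc ((N0 : ℝ) * J) ^ (l + 1) - (l + 1) * b * (N0 * J) ^ l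
        = (N0 * J) ^ (l + 1) * (1 + ((l + 1 : ℕ) : ℝ) * -((b : ℝ) / (N0 * J))) := by
          push_cast
          field_simp
          ring
      _ ≤ _ := by gcongr
  have hsub : ((N0 * J - b : ℕ) : ℝ) = N0 * J - b := by
    rw [Nat.cast_sub hb.le]; push_cast; ring
  have goal : (4 * (J ^ (l + 1) * n0 + 1) : ℝ) ≤ D * (N0 * J - b : ℝ) ^ (l + 1) := by
    have h3 : (4 * n0 + 1 : ℝ) ≤ D * N0 ^ (l + 1) := by exact_mod_cast h
    have h4 : (D * (l + 1) * b * N0 ^ l + 4 : ℝ) ≤ J := by exact_mod_cast hJ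
    have h5 : (1 : ℝ) ≤ (J : ℝ) ^ l := one_le_pow₀ (by exact_mod_cast hJ1)
    have h6 : (D : ℝ) * (((N0 : ℝ) * J) ^ (l + 1) - (l + 1) * b * (N0 * J) ^ l) ≤
      D * (N0 * J - b : ℝ) ^ (l + 1) := by gcongr
    refine le_trans ?_ h6
    have h7 : (D : ℝ) * (((N0 : ℝ) * J) ^ (l + 1) - (l + 1) * b * (N0 * J) ^ l) =
      (D * N0 ^ (l + 1)) * J ^ (l + 1) - J ^ l * (D * (l + 1) * b * N0 ^ l) := by
      rw [mul_pow, mul_pow]; ring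
    rw [h7]
    have h8 : (4 * n0 + 1 : ℝ) * J ^ (l + 1) ≤ (D * N0 ^ (l + 1)) * J ^ (l + 1) := by gcongr
    have h9 : (J : ℝ) ^ l * (D * (l + 1) * b * N0 ^ l + 4) ≤ J ^ l * J := by gcongr
    have h10 : (J : ℝ) ^ (l + 1) = J ^ l * J := pow_succ _ _
    nlinarith
  have : (((4 * (J ^ (l + 1) * n0 + 1) : ℕ)) : ℝ) ≤ ((D * (N0 * J - b) ^ (l + 1) : ℕ) : ℝ) := by
    push_cast [hsub]
    exact goal
  exact_mod_cast this

/-- The hypothesis on mean dimension in the form in which it is used, with `4 ≤ 2^{k+1}`. -/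
lemma exists_small_widim {k D : ℕ} (hk : 1 ≤ k) {X : Type*} [MetricSpace X]
    (T : (Fin k → ℤ) → X → X) (hmdim : mdim X T < (D : ℝ≥0∞) / 2 ^ (k + 1)) {ε : ℝ}
    (hε : 0 < ε) : ∃ N0 : ℕ, 1 ≤ N0 ∧ 4 * widim X (blockRho T dist N0) ε < D * N0 ^ k := by
  have h1 : (⨅ (N : ℕ) (_ : 1 ≤ N), (widim X (blockRho T dist N) ε : ℝ≥0∞) / (N : ℝ≥0∞) ^ k) <
      (D : ℝ≥0∞) / 2 ^ (k + 1) := by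
    refine lt_of_le_of_lt ?_ hmdim
    exact le_iSup₂ (f := fun (ε : ℝ) (_ : 0 < ε) => ⨅ (N : ℕ) (_ : 1 ≤ N),
      (widim X (blockRho T dist N) ε : ℝ≥0∞) / (N : ℝ≥0∞) ^ k) ε hε
  simp only [iInf_lt_iff] at h1
  obtain ⟨N, hN, h⟩ := h1
  refine ⟨N, hN, ?_⟩
  have hN0 : ((N : ℝ≥0∞) ^ k) ≠ 0 := pow_ne_zero _ (by exact_mod_cast (by omega : N ≠ 0))
  have hNt : ((N : ℝ≥0∞) ^ k) ≠ ⊤ := ENNReal.pow_ne_top (ENNReal.natCast_ne_top N)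
  rw [ENNReal.div_lt_iff (Or.inl hN0) (Or.inl hNt)] at h
  have h2 : (widim X (blockRho T dist N) ε : ℝ≥0∞) * 2 ^ (k + 1) < D * (N : ℝ≥0∞) ^ k := by
    have e : (D : ℝ≥0∞) / 2 ^ (k + 1) * (N : ℝ≥0∞) ^ k = (D * (N : ℝ≥0∞) ^ k) / 2 ^ (k + 1) := by
      rw [div_eq_mul_inv, div_eq_mul_inv]; ring
    rw [e, ENNReal.lt_div_iff_mul_lt (Or.inl (by positivity)) (Or.inl (by finiteness))] at h
    exact h
  have h3 : widim X (blockRho T dist N) ε * 2 ^ (k + 1) < D * N ^ k := by exact_mod_cast h2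
  refine lt_of_le_of_lt ?_ h3
  have : 2 ^ 2 ≤ 2 ^ (k + 1) := Nat.pow_le_pow_right (by norm_num) (by omega)
  nlinarith

/-- Partitions of unity on large blocks with fine members, and with at most a quarter of
`D (N - b)^k` functions active at each point. The members are the interval lengths of the common
refinement of the subdivisions of `[0,1]` coming from the subblocks of side `N0`. Each subdivision
is cut into `R` pieces, stretched to `[0,1]` and superposed; this does not increase the number of
division points, and it makes the word of a point determine all division points up to `2 / R`. -/
lemma exists_block_cover {k D : ℕ} (hk : 1 ≤ k) {X : Type*} [MetricSpace X] [CompactSpace X]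
    (T : (Fin k → ℤ) → X → X) (hT : IsZkAction T)
    (hmdim : mdim X T < (D : ℝ≥0∞) / 2 ^ (k + 1)) {ε : ℝ} (hε : 0 < ε) (b : ℕ) :
    ∃ (N M : ℕ) (h : Fin M → X → ℝ), b < N ∧ (∀ v, Continuous (h v)) ∧ (∀ v x, 0 ≤ h v x) ∧
      (∀ x, ∑ v, h v x = 1) ∧
      (∀ v x y, h v x ≠ 0 → h v y ≠ 0 → ∀ a : Fin k → ℤ, (∀ i, 0 ≤ a i ∧ a i < N) →
        dist (T a x) (T a y) < ε) ∧
      ∀ x, 4 * {v | h v x ≠ 0}.ncard ≤ D * (N - b) ^ k := by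
  classical
  obtain ⟨N0, hN0, hw⟩ := exists_small_widim hk T hmdim hε
  obtain ⟨M, h, hc, hnn, hsum, hcard, hsep⟩ := widim_spec T hT N0 hN0 hε
  set n0 := widim X (blockRho T dist N0) ε with hn0
  let F : X → ℕ → ℝ := fun x v => cumSum (fun u => h u x) v
  have hF0 : ∀ x, F x 0 = 0 := fun x => cumSum_zero
  have hFM : ∀ x, F x M = 1 := fun x => (cumSum_of_le le_rfl).trans (hsum x)
  have hFmono : ∀ x, Monotone (F x) := fun x => cumSum_mono fun v => hnn v x
  have hFc : ∀ v, Continuous fun x => F x v := by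
    intro v
    refine continuous_finsetSum _ fun u _ => ?_
    split_ifs
    · exact hc u
    · exact continuous_const
  -- closeness of all cumulative sums forces closeness of the block orbits
  obtain ⟨η, hη, hsep'⟩ : ∃ η > 0, ∀ x y, (∀ v, |F x v - F y v| < η) → ∀ a : Fin k → Fin N0,
      dist (T (fun i => (a i : ℤ)) x) (T (fun i => (a i : ℤ)) y) < ε := by
    let φ : X × X → ℝ := fun p => ∑ v : Fin (M + 1), |F p.1 v - F p.2 v|
    have hφ : Continuous φ := by
      refine continuous_finsetSum _ fun v _ => ?_
      exact (((hFc v).comp continuous_fst).sub ((hFc v).comp continuous_snd)).abs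
    let K : Set (X × X) := ⋃ a : Fin k → Fin N0, {p | ε ≤
      dist (T (fun i => (a i : ℤ)) p.1) (T (fun i => (a i : ℤ)) p.2)}
    have hK : IsCompact K := by
      refine (isClosed_iUnion_of_finite fun a => ?_).isCompact
      exact isClosed_le continuous_const
        (((hT.cont _).comp continuous_fst).dist ((hT.cont _).comp continuous_snd))
    have hpos : ∀ p ∈ K, 0 < φ p := by
      intro p hp
      rcases (Finset.sum_nonneg fun v _ => abs_nonneg _ : 0 ≤ φ p).eq_or_lt with h0 | h0
      · exfalso
        have h1 := (Finset.sum_eq_zero_iff_of_nonneg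
          (fun v _ => abs_nonneg (F p.1 (v : Fin (M + 1)) - F p.2 v))).1 h0.symm
        have h2 : ∀ v : ℕ, v < M + 1 → F p.1 v = F p.2 v := fun v hv =>
          sub_eq_zero.1 (abs_eq_zero.1 (h1 ⟨v, hv⟩ (Finset.mem_univ _)))
        obtain ⟨a, ha⟩ := Set.mem_iUnion.1 hp
        refine absurd (hsep p.1 p.2 (fun v => ?_) a) (not_lt.2 ha)
        have e1 := cumSum_succ (h := fun u => h u p.1) v
        have e2 := cumSum_succ (h := fun u => h u p.2) v
        have e3 := h2 v (by omega)
        have e4 := h2 (v + 1) (by omega)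
        simp only [F] at e3 e4
        linarith
      · exact h0
    obtain ⟨c, hc0, hcK⟩ := hK.exists_forall_le' hφ.continuousOn hpos
    refine ⟨c / (M + 1), by positivity, fun x y hxy a => ?_⟩
    by_contra! hge
    have h1 := hcK (x, y) (Set.mem_iUnion.2 ⟨a, hge⟩)
    have h2 : φ (x, y) < ∑ v : Fin (M + 1), c / (M + 1) :=
      Finset.sum_lt_sum_of_nonempty Finset.univ_nonempty fun v _ => hxy v
    rw [Finset.sum_const, Finset.card_univ, Fintype.card_fin, nsmul_eq_mul] at h2
    have h3 : ((M + 1 : ℕ) : ℝ) * (c / (M + 1)) = c := by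
      push_cast; field_simp
    linarith
  obtain ⟨R, hR⟩ := exists_nat_gt (2 / η)
  have hR0 : (0 : ℝ) < R := lt_trans (by positivity) hR
  have hRpos : 0 < R := by exact_mod_cast hR0
  have hRη : 2 / (R : ℝ) < η := by
    rw [div_lt_iff₀ hR0]; rw [div_lt_iff₀ hη] at hR; linarith
  -- large enough for `block_numerics`, and such that `b < N0 * J`
  let J := D * k * b * N0 ^ (k - 1) + 4 + b
  have hJpos : 0 < J := by omega
  have hbJ : b < N0 * J := calc
    b < J := by omega
    _ = 1 * J := (one_mul J).symm
    _ ≤ N0 * J := Nat.mul_le_mul_right J hN0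
  have : Nonempty (Fin J) := ⟨⟨0, hJpos⟩⟩
  have : Nonempty (Fin R) := ⟨⟨0, hRpos⟩⟩
  -- the subblock of index `j` begins at `sh j`; piece `r` of its subdivision is `G x (j, r)`
  let sh : (Fin k → Fin J) → Fin k → ℤ := fun j i => (N0 : ℤ) * (j i : ℤ)
  let G : X → ((Fin k → Fin J) × Fin R) → ℕ → ℝ := fun x q v =>
    clamp (R * F (T (sh q.1) x) v - q.2)
  have hGm : ∀ x q, Monotone (G x q) := by
    intro x q v v' hv
    refine clamp_mono ?_
    have := hFmono (T (sh q.1) x) hv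
    have := mul_le_mul_of_nonneg_left this hR0.le
    linarith
  have hG0 : ∀ x q, G x q 0 = 0 := by
    intro x q
    refine clamp_of_nonpos ?_
    rw [hF0]
    have : (0 : ℝ) ≤ (q.2 : ℕ) := Nat.cast_nonneg _
    linarith
  have hG1 : ∀ x q, G x q M = 1 := by
    intro x q
    refine clamp_of_one_le ?_
    rw [hFM]
    have : ((q.2 : ℕ) : ℝ) + 1 ≤ R := by exact_mod_cast q.2.2
    linarith
  have hGc : ∀ q v, Continuous fun x => G x q v := by
    intro q v
    refine continuous_clamp.comp ?_
    exact (continuous_const.mul ((hFc v).comp (hT.cont _))).sub continuous_const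
  let e := Fintype.equivFin ((Fin k → Fin J) × Fin R → Fin M)
  refine ⟨N0 * J, _, fun v x => wordLength (G x) (e.symm v), hbJ, ?_, ?_, ?_, ?_, ?_⟩
  · intro v
    unfold wordLength
    refine continuous_const.max (Continuous.sub ?_ ?_)
    · exact Continuous.finset_inf'_apply _ fun q _ => hGc q _
    · exact Continuous.finset_sup'_apply _ fun q _ => hGc q _
  · exact fun v x => wordLength_nonneg _
  · intro x
    rw [Equiv.sum_comp e.symm (fun w => wordLength (G x) w)]
    exact sum_wordLength (hGm x) (hG0 x) (hG1 x)
  · intro v x y hx hy a ha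
    simp only at hx hy
    set w := e.symm v with hwdef
    have hx' := wordLength_ne_zero_iff.1 hx
    have hy' := wordLength_ne_zero_iff.1 hy
    -- a gap of more than `2 / R` contains a whole piece `[r / R, (r + 1) / R]`, whose letter in the
    -- word of `x` is then different from the one in the word of `y`
    have key : ∀ x y, (∀ q q', G x q (w q) < G x q' (w q' + 1)) →
        (∀ q q', G y q (w q) < G y q' (w q' + 1)) → ∀ j v,
        F (T (sh j) y) v ≤ F (T (sh j) x) v + 2 / R := by
      intro x y hx' hy' j v
      by_contra! hlt
      have hge0 : 0 ≤ F (T (sh j) x) v := by rw [← hF0 (T (sh j) x)]; exact hFmono _ (Nat.zero_le v)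
      have hle1 : F (T (sh j) y) v ≤ 1 := by
        have : F (T (sh j) y) (max v M) = 1 := (cumSum_of_le (le_max_right _ _)).trans (hsum _)
        rw [← this]; exact hFmono _ (le_max_left _ _)
      have hmul : R * F (T (sh j) x) v + 2 < R * F (T (sh j) y) v := by
        have := mul_lt_mul_of_pos_left hlt hR0
        rw [mul_add, mul_div_cancel₀ _ hR0.ne'] at this
        exact this
      let r := ⌈R * F (T (sh j) x) v⌉₊
      have hr1 : R * F (T (sh j) x) v ≤ r := Nat.le_ceil _
      have hr2 : (r : ℝ) < R * F (T (sh j) x) v + 1 := Nat.ceil_lt_add_one (by positivity)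
      have hrR : r < R := by
        have : (r : ℝ) < R := by nlinarith
        exact_mod_cast this
      let q : (Fin k → Fin J) × Fin R := (j, ⟨r, hrR⟩)
      have hGx : G x q v = 0 := clamp_of_nonpos (by simp only [q]; linarith)
      have hGy : G y q v = 1 := clamp_of_one_le (by simp only [q]; linarith)
      have h1 : v < w q + 1 := by
        by_contra! hle
        have h2 := hGm x q hle
        have h3 := hx' q q
        have h4 : 0 ≤ G x q (w q) := clamp_nonneg _
        linarith
      have h2 : (w q : ℕ) < v := by
        by_contra! hle
        have h2 := hGm y q hle
        have h3 := hy' q q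
        have h4 : G y q (w q + 1) ≤ 1 := clamp_le_one _
        linarith
      omega
    have hN0' : (0 : ℤ) < N0 := by exact_mod_cast hN0
    have hdiv : ∀ i, 0 ≤ a i / N0 ∧ a i / N0 < J := fun i =>
      ⟨Int.ediv_nonneg (ha i).1 hN0'.le, Int.ediv_lt_of_lt_mul hN0' (by
        have := (ha i).2; push_cast at this; linarith)⟩
    have hmod : ∀ i, 0 ≤ a i % N0 ∧ a i % N0 < N0 := fun i =>
      ⟨Int.emod_nonneg _ hN0'.ne', Int.emod_lt_of_pos _ hN0'⟩
    let j : Fin k → Fin J := fun i => ⟨(a i / N0).toNat, by have := hdiv i; omega⟩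
    let a' : Fin k → Fin N0 := fun i => ⟨(a i % N0).toNat, by have := hmod i; omega⟩
    have hsplit : a = (fun i => ((a' i : ℕ) : ℤ)) + sh j := by
      ext i
      simp only [a', sh, j, Pi.add_apply, Int.toNat_of_nonneg (hdiv i).1,
        Int.toNat_of_nonneg (hmod i).1]
      exact (Int.emod_add_mul_ediv (a i) N0).symm
    rw [hsplit, hT.map_add, hT.map_add]
    refine hsep' _ _ (fun u => ?_) a'
    have k1 := key x y hx' hy' j u
    have k2 := key y x hy' hx' j u
    rw [abs_lt]
    constructor <;> linarith
  · intro x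
    have hval : ∀ j : Fin k → Fin J, ∃ S : Finset ℝ, S.card ≤ n0 ∧
        ∀ v, F (T (sh j) x) v ∈ Set.Ioo (0 : ℝ) 1 → F (T (sh j) x) v ∈ S := fun j =>
      exists_cumSum_values (hsum _) (hcard _)
    choose S hS1 hS2 using hval
    -- distinct pieces of one subdivision share no division points in their interiors, so that
    -- taking fractional parts collects the interior division points of all pieces
    let S' : Finset ℝ := Finset.univ.biUnion fun j => (S j).image fun f => Int.fract (R * f)
    have hS' : S'.card ≤ J ^ k * n0 := by
      refine Finset.card_biUnion_le.trans ?_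
      calc _ ≤ ∑ j : Fin k → Fin J, n0 :=
            Finset.sum_le_sum fun j _ => Finset.card_image_le.trans (hS1 j)
        _ = J ^ k * n0 := by simp
    have hcount := ncard_wordLength_le (hGm x) (hG0 x) (hG1 x) S' (by
      intro q v hv
      have e1 : G x q v = R * F (T (sh q.1) x) v - q.2 := clamp_mem_Ioo hv
      rw [e1] at hv ⊢
      have hq0 : (0 : ℝ) ≤ (q.2 : ℕ) := Nat.cast_nonneg _
      have hq1 : ((q.2 : ℕ) : ℝ) + 1 ≤ R := by exact_mod_cast q.2.2
      refine Finset.mem_biUnion.2 ⟨q.1, Finset.mem_univ _, Finset.mem_image.2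
        ⟨F (T (sh q.1) x) v, hS2 q.1 v ⟨?_, ?_⟩, ?_⟩⟩
      · have : 0 < R * F (T (sh q.1) x) v := by linarith [hv.1]
        exact pos_of_mul_pos_right this hR0.le
      · have : R * F (T (sh q.1) x) v < R * 1 := by linarith [hv.2]
        exact lt_of_mul_lt_mul_left this hR0.le
      · rw [Int.fract_eq_iff]
        exact ⟨hv.1.le, hv.2, (q.2 : ℕ), by push_cast; ring⟩)
    have hre : {v | wordLength (G x) (e.symm v) ≠ 0}.ncard ≤
        {w | wordLength (G x) w ≠ 0}.ncard :=
      Set.ncard_le_ncard_of_injOn (fun v => e.symm v) (fun v hv => hv) e.symm.injective.injOn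
        (Set.toFinite _)
    calc _ ≤ 4 * (J ^ k * n0 + 1) := by
          refine Nat.mul_le_mul_left 4 (hre.trans (hcount.trans ?_))
          omega
      _ ≤ _ := block_numerics hk hN0 hw (by omega) hbJ

/-! ### Marker functions -/

section Action

variable {k : ℕ} {X : Type*} [TopologicalSpace X] {T : (Fin k → ℤ) → X → X}

lemma IsZkAction.neg_apply (hT : IsZkAction T) (n : Fin k → ℤ) (x : X) : T (-n) (T n x) = x := by
  rw [← hT.map_add, neg_add_cancel, hT.map_zero]

lemma IsZkAction.apply_neg (hT : IsZkAction T) (n : Fin k → ℤ) (x : X) : T n (T (-n) x) = x := by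
  rw [← hT.map_add, add_neg_cancel, hT.map_zero]

/-- A continuous form of the marker property: the support of `α` is disjoint from its small translates,
and the set where `α = 1` is visited by every orbit within bounded time. -/
lemma exists_marker_function [CompactSpace X] [T4Space X]
    (hT : IsZkAction T) (hmarker : MarkerProperty T) (M : ℕ) :
    ∃ (α : X → ℝ) (L : ℕ), Continuous α ∧ (∀ x, 0 ≤ α x) ∧ (∀ x, α x ≤ 1) ∧
      (∀ x a, α x ≠ 0 → α (T a x) ≠ 0 → (∀ i, |a i| ≤ (M : ℤ)) → a = 0) ∧
      ∀ x, ∃ n : Fin k → ℤ, (∀ i, |n i| ≤ (L : ℤ)) ∧ α (T n x) = 1 := by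
  classical
  obtain ⟨U, hUo, hUc, hUd⟩ := hmarker (Finset.Icc (fun _ => -(M : ℤ)) (fun _ => (M : ℤ)))
  have hex : ∀ x, ∃ n, T n x ∈ U := by
    intro x
    have : x ∈ ⋃ n, T n '' U := by rw [hUc]; trivial
    obtain ⟨n, y, hy, rfl⟩ := Set.mem_iUnion.1 this
    exact ⟨-n, by rwa [hT.neg_apply]⟩
  choose n hn using hex
  have hW : ∀ x, ∃ C ∈ 𝓝 (T (n x) x), IsClosed C ∧ C ⊆ U := fun x =>
    exists_mem_nhds_isClosed_subset (hUo.mem_nhds (hn x))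
  choose C hCn hCc hCU using hW
  obtain ⟨t, ht⟩ := CompactSpace.elim_nhds_subcover (fun x => T (n x) ⁻¹' C x)
    (fun x => (hT.cont (n x)).continuousAt (hCn x))
  obtain ⟨f, hf0, hf1, hf⟩ := exists_continuous_zero_one_of_isClosed hUo.isClosed_compl
    (t.finite_toSet.isClosed_biUnion fun x _ => hCc x) (by
      rw [Set.disjoint_left]
      intro y hy hy'
      simp only [Set.mem_iUnion] at hy'
      obtain ⟨x, _, hx⟩ := hy'
      exact hy (hCU x hx))
  have hfU : ∀ x, f x ≠ 0 → x ∈ U := fun x hx => by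
    by_contra h
    exact hx (hf0 h)
  refine ⟨f, t.sup fun x => Finset.univ.sup fun i => (n x i).natAbs, f.continuous,
    fun x => (hf x).1, fun x => (hf x).2, ?_, ?_⟩
  · intro x a hx hax ha
    by_contra hne
    have hmem : a ∈ Finset.Icc (fun _ : Fin k => -(M : ℤ)) (fun _ => (M : ℤ)) :=
      Finset.mem_Icc.2 ⟨fun i => (abs_le.1 (ha i)).1, fun i => (abs_le.1 (ha i)).2⟩
    have hmem2 : T a x ∈ U ∩ T a '' U := ⟨hfU _ hax, x, hfU x hx, rfl⟩
    rw [hUd a hmem hne] at hmem2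
    exact hmem2
  · intro x
    have hx : x ∈ ⋃ x ∈ t, T (n x) ⁻¹' C x := by rw [ht]; trivial
    simp only [Set.mem_iUnion] at hx
    obtain ⟨y, hy, hxy⟩ := hx
    refine ⟨n y, fun i => ?_, ?_⟩
    · have h1 := Finset.le_sup (f := fun i => (n y i).natAbs) (Finset.mem_univ i)
      have h2 := Finset.le_sup (f := fun x => Finset.univ.sup fun i => (n x i).natAbs) hy
      have := h1.trans h2
      rw [Int.abs_eq_natAbs]
      exact_mod_cast this
    · refine hf1 ?_
      simp only [Set.mem_iUnion]
      exact ⟨y, hy, hxy⟩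

/-- A closed set which is disjoint from finitely many of its translates carries a continuous
function whose support has the same property. -/
lemma exists_separated_function [NormalSpace X] (hT : IsZkAction T) {K : Set X} (hK : IsClosed K)
    (A : Finset (Fin k → ℤ)) (hA : ∀ a ∈ A, ∀ x ∈ K, T a x ∉ K) :
    ∃ u : X → ℝ, Continuous u ∧ (∀ x, 0 ≤ u x) ∧ (∀ x, u x ≤ 1) ∧ (∀ x ∈ K, u x = 1) ∧
      ∀ a ∈ A, ∀ x, u x ≠ 0 → u (T a x) ≠ 0 → False := by
  have hsep : ∀ a : A, ∃ V W : Set X, IsOpen V ∧ IsOpen W ∧ K ⊆ V ∧ T a.1 ⁻¹' K ⊆ W ∧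
      Disjoint V W := by
    intro a
    have := normal_separation hK (hK.preimage (hT.cont a.1))
      (Set.disjoint_left.2 fun x hx => hA a.1 a.2 x hx)
    obtain ⟨V, W, h1, h2, h3, h4, h5⟩ := this
    exact ⟨V, W, h1, h2, h3, h4, h5⟩
  choose V W hV hW hKV hKW hVW using hsep
  let O : Set X := ⋂ a : A, V a ∩ T (-a.1) ⁻¹' W a
  have hO : IsOpen O := isOpen_iInter_of_finite fun a =>
    (hV a).inter ((hW a).preimage (hT.cont _))
  have hKO : K ⊆ O := by
    intro x hx
    refine Set.mem_iInter.2 fun a => ⟨hKV a hx, hKW a ?_⟩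
    change T a.1 (T (-a.1) x) ∈ K
    rwa [hT.apply_neg]
  obtain ⟨f, hf0, hf1, hf⟩ := exists_continuous_zero_one_of_isClosed hO.isClosed_compl hK
    (Set.disjoint_left.2 fun x hx hx' => hx (hKO hx'))
  have hfO : ∀ x, f x ≠ 0 → x ∈ O := fun x hx => by
    by_contra h
    exact hx (hf0 h)
  refine ⟨f, f.continuous, fun x => (hf x).1, fun x => (hf x).2, fun x hx => hf1 hx, ?_⟩
  intro a ha x hx hax
  have h1 := (Set.mem_iInter.1 (hfO x hx) ⟨a, ha⟩).1
  have h2 := (Set.mem_iInter.1 (hfO _ hax) ⟨a, ha⟩).2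
  simp only [Set.mem_preimage, hT.neg_apply] at h2
  exact Set.disjoint_left.1 (hVW ⟨a, ha⟩) h1 h2

end Action

/-! ### Numbering of block positions, and overwriting -/

/-- The integer with base-`m` digits `s`. -/
def digitSum {k : ℕ} (m : ℕ) (s : Fin k → ℤ) : ℤ := ∑ i, s i * (m : ℤ) ^ (i : ℕ)

lemma digitSum_add {k : ℕ} (m : ℕ) (s t : Fin k → ℤ) :
    digitSum m (s + t) = digitSum m s + digitSum m t := by
  simp [digitSum, add_mul, Finset.sum_add_distrib]

/-- A numbering of the coordinates of a block in which a translation of the block shifts the numbers by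
a constant. -/
lemma exists_row_equiv (k D m : ℕ) : ∃ e : ((Fin k → Fin m) × Fin D) ≃ Fin (m ^ k * D),
    ∀ r, ((e r : ℕ) : ℤ) = D * digitSum m (fun i => ((r.1 i : ℕ) : ℤ)) + (r.2 : ℕ) := by
  refine ⟨(Equiv.prodCongr finFunctionFinEquiv (Equiv.refl _)).trans finProdFinEquiv, ?_⟩
  rintro ⟨s, d⟩
  simp only [Equiv.trans_apply, Equiv.prodCongr_apply, Prod.map_apply, Equiv.refl_apply,
    finProdFinEquiv_apply_val, finFunctionFinEquiv_apply, digitSum]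
  push_cast
  ring

/-- Base-`m` digits between `-n` and `n` are unique if `2 n < m`. -/
lemma digitSum_eq_zero {k m n : ℕ} (hm : 2 * n < m) {a : Fin k → ℤ} (ha : ∀ i, |a i| ≤ (n : ℤ))
    (h : digitSum m a = 0) : a = 0 := by
  have hb : ∀ i, -(n : ℤ) ≤ a i ∧ a i ≤ n := fun i => abs_le.1 (ha i)
  let s : Fin k → Fin m := fun i => ⟨(a i + n).toNat, by have := hb i; omega⟩
  let s0 : Fin k → Fin m := fun _ => ⟨n, by omega⟩
  have hs : ∀ i, ((s i : ℕ) : ℤ) = a i + n := fun i => by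
    have := hb i
    simp only [s]; omega
  have h1 : ∀ u : Fin k → Fin m, ((finFunctionFinEquiv u : ℕ) : ℤ) =
      digitSum m (fun i => ((u i : ℕ) : ℤ)) := by
    intro u
    rw [finFunctionFinEquiv_apply, digitSum]
    push_cast
    rfl
  have h2 : s = s0 := by
    apply finFunctionFinEquiv.injective
    apply Fin.ext
    have : ((finFunctionFinEquiv s : ℕ) : ℤ) = (finFunctionFinEquiv s0 : ℕ) := by
      rw [h1, h1]
      have e : (fun i => ((s i : ℕ) : ℤ)) = a + fun i => ((s0 i : ℕ) : ℤ) := by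
        ext i; rw [hs]; rfl
      rw [e, digitSum_add, h, zero_add]
    exact_mod_cast this
  ext i
  have := hs i
  rw [h2] at this
  simp only [s0] at this
  simp only [Pi.zero_apply]
  omega

lemma abs_digitSum_le {k m n : ℕ} {a : Fin k → ℤ} (ha : ∀ i, |a i| ≤ (n : ℤ)) :
    |digitSum m a| ≤ ∑ i : Fin k, (n : ℤ) * (m : ℤ) ^ (i : ℕ) := by
  refine (Finset.abs_sum_le_sum_abs _ _).trans (Finset.sum_le_sum fun i _ => ?_)
  rw [abs_mul, abs_of_nonneg (by positivity : (0 : ℤ) ≤ (m : ℤ) ^ (i : ℕ))]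
  exact mul_le_mul_of_nonneg_right (ha i) (by positivity)

section Overwrite

variable {ι : Type*} [Fintype ι] {ω c : ι → ℝ} {f δ : ℝ}

/-- Overwriting `f` by values `c i` with weights `ω i`, at most one of which is nonzero. -/
lemma overwrite_eq (h1 : ∀ i j, ω i ≠ 0 → ω j ≠ 0 → i = j) {i : ι} (hi : ω i = 1) :
    f + ∑ j, ω j * (c j - f) = c i := by
  rw [Finset.sum_eq_single i, hi]
  · ring
  · intro j _ hj
    have : ω j = 0 := by
      by_contra h
      exact hj (h1 j i h (by rw [hi]; exact one_ne_zero))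
    rw [this, zero_mul]
  · exact fun h => absurd (Finset.mem_univ i) h

lemma overwrite_close (hδ : 0 < δ) (h1 : ∀ i j, ω i ≠ 0 → ω j ≠ 0 → i = j) (h2 : ∀ i, 0 ≤ ω i)
    (h3 : ∀ i, ω i ≤ 1) (h4 : ∀ i, ω i ≠ 0 → |c i - f| < δ) :
    |f + ∑ j, ω j * (c j - f) - f| < δ := by
  rw [add_sub_cancel_left]
  by_cases h : ∃ i, ω i ≠ 0
  · obtain ⟨i, hi⟩ := h
    rw [Finset.sum_eq_single i]
    · rw [abs_mul, abs_of_nonneg (h2 i)]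
      have := h4 i hi
      have := mul_le_mul_of_nonneg_right (h3 i) (abs_nonneg (c i - f))
      linarith
    · intro j _ hj
      have : ω j = 0 := by
        by_contra h
        exact hj (h1 j i h hi)
      rw [this, zero_mul]
    · exact fun h => absurd (Finset.mem_univ i) h
  · push Not at h
    simpa [h] using hδ

/-- A convex combination of numbers close to `f` is close to `f`. -/
lemma convex_close {h : ι → ℝ} (h0 : ∀ v, 0 ≤ h v) (h1 : ∑ v, h v = 1) {A : ι → ℝ}
    (hA : ∀ v, h v ≠ 0 → |A v - f| < δ) : |∑ v, h v * A v - f| < δ := by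
  have e : ∑ v, h v * A v - f = ∑ v, h v * (A v - f) := by
    simp only [mul_sub]
    rw [Finset.sum_sub_distrib, ← Finset.sum_mul, h1, one_mul]
  rw [e]
  have hex : ∃ v, h v ≠ 0 := by
    by_contra! hz
    simp [hz] at h1
  obtain ⟨v0, hv0⟩ := hex
  calc |∑ v, h v * (A v - f)| ≤ ∑ v, |h v * (A v - f)| := Finset.abs_sum_le_sum_abs _ _
    _ < ∑ v, h v * δ := by
      refine Finset.sum_lt_sum (fun v _ => ?_) ⟨v0, Finset.mem_univ _, ?_⟩
      · rw [abs_mul, abs_of_nonneg (h0 v)]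
        by_cases hv : h v = 0
        · simp [hv]
        · exact mul_le_mul_of_nonneg_left (hA v hv).le (h0 v)
      · rw [abs_mul, abs_of_nonneg (h0 v0)]
        exact mul_lt_mul_of_pos_left (hA v0 hv0) (lt_of_le_of_ne (h0 v0) hv0.symm)
    _ = δ := by rw [← Finset.sum_mul, h1, one_mul]

end Overwrite

/-! ### Markers that are readable from a perturbed map -/

/-- A point of the discrete cube `[N]^k`, viewed in `ℤ^k`. -/
def offset {k N : ℕ} (s : Fin k → Fin N) : Fin k → ℤ := fun i => ((s i : ℕ) : ℤ)

lemma offset_injective {k N : ℕ} : Function.Injective (offset (k := k) (N := N)) := by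
  intro s t h
  ext i
  have := congrFun h i
  simp only [offset] at this
  exact_mod_cast this

lemma exists_offset {k N : ℕ} {a : Fin k → ℤ} (ha : ∀ i, 0 ≤ a i ∧ a i < N) :
    ∃ s : Fin k → Fin N, offset s = a :=
  ⟨fun i => ⟨(a i).toNat, by have := ha i; omega⟩, by
    ext i; have := ha i; simp only [offset]; omega⟩

lemma offset_bounds {k N : ℕ} (s : Fin k → Fin N) (i : Fin k) : 0 ≤ offset s i ∧ offset s i < N := by
  have := (s i).2
  simp only [offset]; omega

/-- The shift action on `(ℝ^D)^{ℤ^k}`. -/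
lemma isZkAction_shift (k D : ℕ) : IsZkAction
    (fun (a : Fin k → ℤ) (p : (Fin k → ℤ) → Fin D → ℝ) n => p (n + a)) where
  cont a := continuous_pi fun n => continuous_apply (n + a)
  map_zero p := by simp
  map_add m n p := by
    ext i
    simp only [add_assoc]

lemma exists_modulus {X : Type*} [MetricSpace X] [CompactSpace X] {D : ℕ} {f : X → Fin D → ℝ}
    (hf : Continuous f) {δ : ℝ} (hδ : 0 < δ) :
    ∃ ε > 0, ∀ x y, dist x y < ε → ∀ d, |f x d - f y d| < δ := by
  have := CompactSpace.uniformContinuous_of_continuous hf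
  obtain ⟨ε, hε, h⟩ := Metric.uniformContinuous_iff.1 this δ hδ
  refine ⟨ε, hε, fun x y hxy d => ?_⟩
  have h1 := (dist_pi_lt_iff hδ).1 (h hxy) d
  rwa [Real.dist_eq] at h1

/-- A small perturbation of `f` from which a marker function can be read. Codes of blocks are written
at the markers. By genericity the code at a marker is never equal to a code read with a small
nonzero offset, so the closed set of readings at full markers is disjoint from its small translates
in the shift space, and a marker function can be pulled back from there. -/
lemma exists_recognizable_markers {k D : ℕ} (hk : 1 ≤ k) {X : Type*} [MetricSpace X]
    [CompactSpace X] (T : (Fin k → ℤ) → X → X) (hT : IsZkAction T) (hmarker : MarkerProperty T)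
    (hmdim : mdim X T < (D : ℝ≥0∞) / 2 ^ (k + 1)) {f : X → Fin D → ℝ} (hf : Continuous f)
    {δ : ℝ} (hδ : 0 < δ) (N' : ℕ) :
    ∃ (g : X → Fin D → ℝ) (α : X → ℝ) (L : ℕ), Continuous g ∧ (∀ x d, |g x d - f x d| < δ) ∧
      Continuous α ∧ (∀ x, 0 ≤ α x) ∧ (∀ x, α x ≤ 1) ∧
      (∀ x a, α x ≠ 0 → α (T a x) ≠ 0 → (∀ i, |a i| ≤ (N' : ℤ)) → a = 0) ∧
      (∀ x, ∃ n : Fin k → ℤ, (∀ i, |n i| ≤ (L : ℤ)) ∧ α (T n x) = 1) ∧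
      ∀ x y, (∀ n, g (T n x) = g (T n y)) → α x = α y := by
  classical
  obtain ⟨ε, hε, hmod⟩ := exists_modulus hf (half_pos hδ)
  obtain ⟨N, M, h, hN, hc, hnn, hsum, hsmall, hcard⟩ :=
    exists_block_cover hk T hT hmdim hε (4 * N' + 1)
  obtain ⟨m, hm⟩ : ∃ m, N = m + 2 * N' := ⟨N - 2 * N', by omega⟩
  have hm2 : 2 * N' < m := by omega
  obtain ⟨α, L, hαc, hα0, hα1, hαsep, hαL⟩ := exists_marker_function hT hmarker N
  -- the profile of the code word of `v`
  let B : Fin M → (Fin k → ℤ) → Fin D → ℝ := fun v s d =>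
    if hx : ∃ x, h v x ≠ 0 then f (T s hx.choose) d else 0
  have hB : ∀ (v : Fin M) (y : X) (s : Fin k → ℤ) (d : Fin D), h v y ≠ 0 →
      (∀ i, 0 ≤ s i ∧ s i < (N : ℤ)) → |B v s d - f (T s y) d| < δ / 2 := by
    intro v y s d hy hs
    have hx : ∃ x, h v x ≠ 0 := ⟨y, hy⟩
    simp only [B, dif_pos hx]
    exact hmod _ _ (hsmall v _ _ hx.choose_spec hy s hs) d
  -- the position of a row, and the nodes
  let N'c : Fin k → ℤ := fun _ => (N' : ℤ)
  let ρ : (Fin k → ℤ) → Fin D → ℤ := fun s d => D * digitSum m (s - N'c) + (d : ℕ)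
  -- a spacing of the nodes that exceeds `|D * digitSum m a|` for every `a ∈ Abox`
  let κ : ℤ := D * (∑ i : Fin k, (N' : ℤ) * (m : ℤ) ^ (i : ℕ)) + 1
  let E : Fin M → (Fin k → ℤ) → Fin D → ℝ := fun v s d =>
    (2 : ℝ) ^ ((ρ s d - κ * ((v : ℕ) : ℤ)) ^ 2)
  have hE : ∀ v s d, 0 < E v s d := fun v s d => by positivity
  obtain ⟨e, he⟩ := exists_row_equiv k D m
  let Abox : Finset (Fin k → ℤ) := (Finset.Icc (fun _ => -(N' : ℤ)) (fun _ => (N' : ℤ))).erase 0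
  have hAbox : ∀ a, a ∈ Abox ↔ a ≠ 0 ∧ ∀ i, |a i| ≤ (N' : ℤ) := by
    intro a
    simp only [Abox, Finset.mem_erase, Finset.mem_Icc, abs_le, Pi.le_def, forall_and]
  let nodes : (Fin k → ℤ) → Fin M ⊕ Fin M → ℤ := fun a => Sum.elim
    (fun v => κ * ((v : ℕ) : ℤ)) (fun v => κ * ((v : ℕ) : ℤ) - D * digitSum m a)
  by_cases hD : D = 0
  · -- without coordinates there is nothing to read, and the dimension hypothesis fails
    exfalso
    subst hD
    simp at hmdim
  have hnodes : ∀ a ∈ Abox, Function.Injective (nodes a) := by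
    intro a ha
    obtain ⟨ha0, haN⟩ := (hAbox a).1 ha
    have h1 : digitSum m a ≠ 0 := fun h => ha0 (digitSum_eq_zero hm2 haN h)
    have h2 : |D * digitSum m a| < κ := by
      rw [abs_mul, Nat.abs_cast]
      have := abs_digitSum_le (m := m) haN
      have : (D : ℤ) * |digitSum m a| ≤ D * ∑ i : Fin k, (N' : ℤ) * (m : ℤ) ^ (i : ℕ) := by gcongr
      simp only [κ]; omega
    have h3 : (D : ℤ) * digitSum m a ≠ 0 := mul_ne_zero (by exact_mod_cast hD) h1
    have hκ : 0 < κ := lt_of_le_of_lt (abs_nonneg _) h2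
    have key : ∀ p q : ℤ, κ * p ≠ κ * q - D * digitSum m a := by
      intro p q hpq
      have h4 : D * digitSum m a = κ * (q - p) := by linarith
      have h5 : q - p = 0 := by
        rw [h4, abs_mul, abs_of_pos hκ] at h2
        have : |q - p| < 1 := by nlinarith
        exact Int.abs_lt_one_iff.1 this
      rw [h5, mul_zero] at h4
      exact h3 h4
    have hinj : ∀ v w : Fin M, κ * ((v : ℕ) : ℤ) = κ * ((w : ℕ) : ℤ) → v = w := by
      intro v w hvw
      have := mul_left_cancel₀ hκ.ne' hvw
      exact Fin.ext (by exact_mod_cast this)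
    rintro (v | v) (w | w) hvw
    · exact congrArg Sum.inl (hinj v w hvw)
    · exact absurd hvw (key _ _)
    · exact absurd hvw.symm (key _ _)
    · refine congrArg Sum.inr (hinj v w ?_)
      simp only [nodes, Sum.elim_inr] at hvw
      linarith
  let Asys : (Fin k → ℤ) → Fin M ⊕ Fin M → (Fin k → Fin m) × Fin D → ℝ := fun a => Sum.elim
    (fun v r => B v (offset r.1 + N'c) r.2) (fun v r => B v (offset r.1 + N'c + a) r.2)
  let Emax : ℝ := 1 + ∑ v, ∑ s : Fin k → Fin N, ∑ d, E v (offset s) d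
  have hEmax : ∀ v (s : Fin k → Fin N) d, E v (offset s) d ≤ Emax := by
    intro v s d
    have h1 := Finset.single_le_sum (f := fun d => E v (offset s) d) (fun d _ => (hE _ _ _).le)
      (Finset.mem_univ d)
    have h2 := Finset.single_le_sum (f := fun s : Fin k → Fin N => ∑ d, E v (offset s) d)
      (fun s _ => Finset.sum_nonneg fun d _ => (hE _ _ _).le) (Finset.mem_univ s)
    have h3 := Finset.single_le_sum (f := fun v => ∑ s : Fin k → Fin N, ∑ d, E v (offset s) d)
      (fun v _ => Finset.sum_nonneg fun s _ => Finset.sum_nonneg fun d _ => (hE _ _ _).le)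
      (Finset.mem_univ v)
    simp only [Emax] at h1 h2 h3 ⊢
    linarith
  have hEpos : 0 < Emax := by
    have : 0 ≤ ∑ v, ∑ s : Fin k → Fin N, ∑ d, E v (offset s) d :=
      Finset.sum_nonneg fun v _ => Finset.sum_nonneg fun s _ => Finset.sum_nonneg
        fun d _ => (hE _ _ _).le
    simp only [Emax]; linarith
  obtain ⟨t, ht0, htτ, htgood⟩ := exists_good_param (J := Abox)
    (fun a => {t : ℝ | ¬ ∀ z : Fin M ⊕ Fin M → ℝ, {c | z c ≠ 0}.ncard ≤ m ^ k * D →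
      (∀ r, ∑ c, z c * (Asys a.1 c r + t * (2 : ℝ) ^ ((((e r : ℕ) : ℤ) - nodes a.1 c) ^ 2)) = 0) →
      z = 0})
    (fun a => code_finite_bad_equiv _ e (Asys a.1) (nodes a.1) (hnodes a.1 a.2))
    (τ := δ / 2 / Emax) (by positivity)
  let A : Fin M → (Fin k → ℤ) → Fin D → ℝ := fun v s d => B v s d + t * E v s d
  let g : X → Fin D → ℝ := fun x d => f x d + ∑ s : Fin k → Fin N, α (T (-offset s) x) *
    (∑ v, h v (T (-offset s) x) * A v (offset s) d - f x d)
  have hone : ∀ x, ∀ s s' : Fin k → Fin N, α (T (-offset s) x) ≠ 0 → α (T (-offset s') x) ≠ 0 →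
      s = s' := by
    intro x s s' h1 h2
    have h3 : T (-offset s') x = T (offset s - offset s') (T (-offset s) x) := by
      rw [← hT.map_add]; congr 1; abel
    rw [h3] at h2
    have h4 := hαsep _ _ h1 h2 (fun i => by
      have := offset_bounds s i
      have := offset_bounds s' i
      rw [Pi.sub_apply, abs_le]; omega)
    exact offset_injective (sub_eq_zero.1 h4)
  have hgc : Continuous g := by
    refine continuous_pi fun d => ?_
    have hfd : Continuous fun x => f x d := (continuous_apply d).comp hf
    refine hfd.add (continuous_finsetSum _ fun s _ => ?_)
    refine (hαc.comp (hT.cont _)).mul (Continuous.sub ?_ hfd)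
    exact continuous_finsetSum _ fun v _ => ((hc v).comp (hT.cont _)).mul continuous_const
  have hgclose : ∀ x d, |g x d - f x d| < δ := by
    intro x d
    refine overwrite_close hδ (hone x) (fun s => hα0 _) (fun s => hα1 _) fun s _ => ?_
    refine convex_close (fun v => hnn v _) (hsum _) fun v hv => ?_
    have h1 := hB v _ (offset s) d hv (offset_bounds s)
    rw [hT.apply_neg] at h1
    have h2 : t * E v (offset s) d < δ / 2 := by
      calc t * E v (offset s) d ≤ t * Emax := mul_le_mul_of_nonneg_left (hEmax v s d) ht0.le
        _ < δ / 2 / Emax * Emax := mul_lt_mul_of_pos_right htτ hEpos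
        _ = δ / 2 := div_mul_cancel₀ _ hEpos.ne'
    have h3 : 0 < t * E v (offset s) d := mul_pos ht0 (hE _ _ _)
    simp only [A]
    rw [abs_lt] at h1 ⊢
    constructor <;> linarith
  have hgval : ∀ x, α x = 1 → ∀ a : Fin k → ℤ, (∀ i, 0 ≤ a i ∧ a i < N) → ∀ d,
      g (T a x) d = ∑ v, h v x * A v a d := by
    intro x hx a ha d
    obtain ⟨s, rfl⟩ := exists_offset ha
    simp only [g]
    rw [overwrite_eq (hone (T (offset s) x)) (i := s) (by rw [hT.neg_apply, hx])]
    rw [hT.neg_apply]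
  -- the code of `x` and the code of `y` read with offset `a` form one generic system, whose rows
  -- are the positions of the central cube of side `m`, so that both readings stay inside the block
  have hstar : ∀ x y a, α x = 1 → α y = 1 → a ∈ Abox →
      ¬ ∀ w, g (T w x) = g (T (w + a) y) := by
    intro x y a hx hy ha hw
    obtain ⟨ha0, haN⟩ := (hAbox a).1 ha
    have hgood := htgood ⟨a, ha⟩
    simp only [Set.mem_ofPred_eq, not_not] at hgood
    have hz := hgood (Sum.elim (fun v => h v x) (fun v => -h v y)) (by
      have h1 : {c : Fin M ⊕ Fin M | Sum.elim (fun v => h v x) (fun v => -h v y) c ≠ 0} ⊆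
          Sum.inl '' {v | h v x ≠ 0} ∪ Sum.inr '' {v | h v y ≠ 0} := by
        rintro (v | v) hv
        · exact Or.inl ⟨v, hv, rfl⟩
        · exact Or.inr ⟨v, fun h0 => hv (by simp [h0]), rfl⟩
      have h2 := Set.ncard_le_ncard h1 (Set.toFinite _)
      have h3 := Set.ncard_union_le (Sum.inl '' {v | h v x ≠ 0} : Set (Fin M ⊕ Fin M))
        (Sum.inr '' {v | h v y ≠ 0})
      have h4 := Set.ncard_image_le (f := (Sum.inl : Fin M → Fin M ⊕ Fin M))
        (Set.toFinite {v | h v x ≠ 0})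
      have h5 := Set.ncard_image_le (f := (Sum.inr : Fin M → Fin M ⊕ Fin M))
        (Set.toFinite {v | h v y ≠ 0})
      have h6 := hcard x
      have h7 := hcard y
      have h8 : D * (N - (4 * N' + 1)) ^ k ≤ m ^ k * D := by
        rw [mul_comm]
        gcongr
        omega
      omega) (by
      rintro ⟨s, d⟩
      have hb : ∀ i, N' ≤ (offset s + N'c) i ∧ (offset s + N'c) i < N - N' := fun i => by
        have := offset_bounds s i
        simp only [Pi.add_apply, N'c]; omega
      have e1 := hgval x hx (offset s + N'c) (fun i => by have := hb i; omega) d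
      have e2 := hgval y hy (offset s + N'c + a) (fun i => by
        have := hb i
        have := abs_le.1 (haN i)
        simp only [Pi.add_apply] at *; omega) d
      rw [hw, e2] at e1
      rw [Fintype.sum_sum_type]
      have r1 : (((e (s, d) : ℕ)) : ℤ) = ρ (offset s + N'c) d := by
        rw [he]; simp only [ρ, add_sub_cancel_right]; rfl
      have r2 : ρ (offset s + N'c + a) d = ρ (offset s + N'c) d + D * digitSum m a := by
        simp only [ρ]
        rw [add_sub_right_comm, digitSum_add]; ring
      have f1 : ∀ v, Sum.elim (fun v => h v x) (fun v => -h v y) (Sum.inl v) *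
          (Asys a (Sum.inl v) (s, d) + t * (2 : ℝ) ^
            (((((e (s, d)) : ℕ) : ℤ) - nodes a (Sum.inl v)) ^ 2)) =
          h v x * A v (offset s + N'c) d := by
        intro v
        rw [r1]; rfl
      have f2 : ∀ v, Sum.elim (fun v => h v x) (fun v => -h v y) (Sum.inr v) *
          (Asys a (Sum.inr v) (s, d) + t * (2 : ℝ) ^
            (((((e (s, d)) : ℕ) : ℤ) - nodes a (Sum.inr v)) ^ 2)) =
          -(h v y * A v (offset s + N'c + a) d) := by
        intro v
        rw [r1]
        simp only [Sum.elim_inr, nodes, Asys, A, E]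
        rw [r2, neg_mul]
        congr 5
        ring
      rw [Finset.sum_congr rfl fun v _ => f1 v, Finset.sum_congr rfl fun v _ => f2 v,
        Finset.sum_neg_distrib, e1, add_neg_cancel])
    have hall : ∀ v, h v x = 0 := fun v => congrFun hz (Sum.inl v)
    have := hsum x
    simp [hall] at this
  -- transport to the shift
  let Φ : X → (Fin k → ℤ) → Fin D → ℝ := fun x n => g (T n x)
  have hΦ : Continuous Φ := continuous_pi fun n => hgc.comp (hT.cont n)
  have hΦs : ∀ x a, Φ (T a x) = fun n => Φ x (n + a) := by
    intro x a
    ext n : 1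
    simp only [Φ]
    rw [hT.map_add]
  have hK : IsClosed (Φ '' {x | α x = 1}) :=
    (((isClosed_eq hαc continuous_const).isCompact).image hΦ).isClosed
  obtain ⟨u, huc, hu0, hu1, huK, husep⟩ := exists_separated_function (isZkAction_shift k D) hK Abox
    (by
      rintro a ha _ ⟨y, hy, rfl⟩ ⟨x, hx, hxy⟩
      refine hstar x y a hx hy ha fun w => ?_
      exact congrFun hxy w)
  refine ⟨g, u ∘ Φ, L, hgc, hgclose, huc.comp hΦ, fun x => hu0 _, fun x => hu1 _, ?_, ?_, ?_⟩
  · intro x a h1 h2 ha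
    by_contra hne
    refine husep a ((hAbox a).2 ⟨hne, ha⟩) (Φ x) h1 ?_
    simp only [Function.comp, hΦs] at h2
    exact h2
  · intro x
    obtain ⟨n, hn, hαn⟩ := hαL x
    exact ⟨n, hn, huK _ ⟨_, hαn, rfl⟩⟩
  · intro x y hxy
    have : Φ x = Φ y := funext hxy
    simp only [Function.comp, this]

/-! ### Cells determined by a marker function -/

/-- The cube `[-L, L]^k` in `ℤ^k`. -/
noncomputable def intBox (k L : ℕ) : Finset (Fin k → ℤ) :=
  Finset.Icc (fun _ => -(L : ℤ)) (fun _ => (L : ℤ))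

lemma mem_intBox {k L : ℕ} {a : Fin k → ℤ} : a ∈ intBox k L ↔ ∀ j, |a j| ≤ (L : ℤ) := by
  simp only [intBox, Finset.mem_Icc, abs_le, Pi.le_def, forall_and]

/-- The change `|m - N i|² - |N i|²` of squared distance to `N i` under a step `m`, with the
penalty `2 N |m|₁` that absorbs the rounding of a point of `ℤ^k` to a point of `N ℤ^k`. -/
def stepCost {k : ℕ} (N : ℕ) (i m : Fin k → ℤ) : ℤ :=
  ∑ j, ((m j) ^ 2 - 2 * N * i j * m j + 2 * N * |m j|)

/-- Two sites whose cells of side `q` overlap cannot both beat each other: the two costs add up to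
something very negative if the sites are far apart. -/
lemma stepCost_add_le {k q P : ℕ} {i i' m : Fin k → ℤ}
    (hP : P = 5 * k * (q + 1) ^ 4 + 3 * (q + 1) ^ 2 + 2 * (q + 1))
    (hm : ∀ j, |m j + q * (i' j - i j)| < q) (hbig : ∃ j, (P : ℤ) < |m j|) :
    stepCost (q + 1) i m + stepCost (q + 1) i' (-m) ≤ -2 := by
  obtain ⟨j0, hj0⟩ := hbig
  have hq : (1 : ℤ) ≤ q := by
    have := (abs_nonneg _).trans_lt (hm j0)
    omega
  set N : ℤ := (q : ℤ) + 1 with hN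
  have hNq : ((q + 1 : ℕ) : ℤ) = N := by push_cast; rfl
  let F : Fin k → ℤ := fun j => -2 * (m j) ^ 2 + 6 * N ^ 2 * |m j|
  have hF : ∀ j, F j ≤ 5 * N ^ 4 := by
    intro j
    simp only [F]
    rw [← sq_abs]
    nlinarith [sq_nonneg (2 * |m j| - 3 * N ^ 2), sq_nonneg (N ^ 2)]
  have hF0 : F j0 ≤ -(5 * k * N ^ 4 + 2 * N) := by
    simp only [F]
    rw [← sq_abs]
    have h1 : 5 * k * N ^ 4 + 3 * N ^ 2 + 2 * N < |m j0| := by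
      rw [hP] at hj0; push_cast at hj0; exact hj0
    have h2 : 0 ≤ 5 * k * N ^ 4 + 2 * N := by positivity
    have h3 : 0 ≤ |m j0| := abs_nonneg _
    nlinarith [sq_nonneg N, mul_nonneg h3 (sub_nonneg.2 h1.le)]
  have hsumF : ∑ j, F j ≤ -(2 * N) := by
    have h1 := Finset.single_le_sum (f := fun j => 5 * N ^ 4 - F j)
      (fun j _ => sub_nonneg.2 (hF j)) (Finset.mem_univ j0)
    simp only [Finset.sum_sub_distrib, Finset.sum_const, Finset.card_univ, Fintype.card_fin,
      nsmul_eq_mul] at h1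
    have : 0 ≤ N ^ 4 := by positivity
    linarith
  have hmul : q * (stepCost (q + 1) i m + stepCost (q + 1) i' (-m)) ≤ ∑ j, F j := by
    simp only [stepCost]
    rw [← Finset.sum_add_distrib, Finset.mul_sum]
    refine Finset.sum_le_sum fun j _ => ?_
    simp only [Pi.neg_apply, abs_neg, hNq, F]
    obtain ⟨r, hr⟩ : ∃ r, r = m j + q * (i' j - i j) := ⟨_, rfl⟩
    have hrq := hm j
    rw [← hr] at hrq
    have hrm : r * m j ≤ N * |m j| := by
      calc r * m j ≤ |r * m j| := le_abs_self _
        _ = |r| * |m j| := abs_mul _ _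
        _ ≤ N * |m j| := by gcongr; omega
    have h3 : 0 ≤ |m j| := abs_nonneg _
    have e : (q : ℤ) * (m j ^ 2 - 2 * N * i j * m j + 2 * N * |m j| +
        ((-m j) ^ 2 - 2 * N * i' j * -m j + 2 * N * |m j|)) =
        2 * q * m j ^ 2 + 2 * N * (q * (i' j - i j)) * m j + 4 * N * q * |m j| := by ring
    have e2 : (q : ℤ) * (i' j - i j) = r - m j := by rw [hr]; ring
    rw [e, e2]
    have e3 : (q : ℤ) = N - 1 := by omega
    rw [e3]
    have hN0 : 0 ≤ N := by omega
    nlinarith [mul_le_mul_of_nonneg_left hrm hN0, mul_nonneg hN0 h3]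
  by_contra hcon
  push Not at hcon
  nlinarith

/-- Weights for a contracted Voronoi tiling. The position `n` of the orbit of `x` gets the squared
distance to the origin plus a multiple of `1 - α (T^n x)`; `ω i x = 1` if the position `0` beats
every position `m` of a large box as seen from `(q + 1) i` (up to rounding), and `ω i x = 0` if it
loses clearly to some `m`. The last two clauses say that the cubes of side `q` at `q i` with nonzero
weight are pairwise disjoint, and that the origin is covered by a cube of side `q + 1` at
`n + (q + 1) i` of full weight. -/
lemma exists_cell_weights {k : ℕ} {X : Type*} [TopologicalSpace X]
    {T : (Fin k → ℤ) → X → X} (hT : IsZkAction T) (q P : ℕ)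
    (hP : P = 5 * k * (q + 1) ^ 4 + 3 * (q + 1) ^ 2 + 2 * (q + 1)) {α : X → ℝ} {L : ℕ}
    (hαc : Continuous α) (hα1 : ∀ x, α x ≤ 1)
    (hsep : ∀ x a, α x ≠ 0 → α (T a x) ≠ 0 → (∀ i, |a i| ≤ (P : ℤ)) → a = 0)
    (hL : ∀ x, ∃ n : Fin k → ℤ, (∀ i, |n i| ≤ (L : ℤ)) ∧ α (T n x) = 1) :
    ∃ (I : Finset (Fin k → ℤ)) (ω : (Fin k → ℤ) → X → ℝ),
      (∀ i, Continuous (ω i)) ∧ (∀ i x, 0 ≤ ω i x) ∧ (∀ i x, ω i x ≤ 1) ∧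
      (∀ x y, (∀ n, α (T n x) = α (T n y)) → ∀ i, ω i x = ω i y) ∧
      (∀ x m, ∀ i ∈ I, ∀ i' ∈ I, ω i x ≠ 0 → ω i' (T m x) ≠ 0 →
        (∀ j, |m j + q * (i' j - i j)| < q) → m = 0 ∧ i' = i) ∧
      ∀ x, ∃ n, ∃ i ∈ I, ω i (T n x) = 1 ∧
        ∀ j, -((q : ℤ) + 1) < n j + (q + 1) * i j ∧ n j + (q + 1) * i j ≤ 0 := by
  classical
  set N : ℕ := q + 1 with hN
  let I : ℕ := k * L + 1
  let L2 : ℕ := 2 * N * I + N + L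
  let C : ℝ := k * (L ^ 2 + 2 * N * (N * I + L)) + 1
  have hC : 0 ≤ C := by positivity
  -- the weight of a position in the Voronoi tiling: zero at full markers, prohibitive off markers
  let c : X → ℝ := fun x => C * (1 - α x)
  have hcc : Continuous c := continuous_const.mul (continuous_const.sub hαc)
  have hc0 : ∀ x, 0 ≤ c x := fun x => mul_nonneg hC (sub_nonneg.2 (hα1 x))
  let S : (Fin k → ℤ) → (Fin k → ℤ) → X → ℝ := fun i m x => stepCost N i m + c (T m x) - c x
  let ω : (Fin k → ℤ) → X → ℝ := fun i x => ∏ m ∈ intBox k L2, clamp (1 + S i m x)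
  have hωS : ∀ i x, ω i x ≠ 0 → ∀ m, (∀ j, |m j| ≤ (L2 : ℤ)) → -1 < S i m x := by
    intro i x h m hm
    by_contra hcon
    push Not at hcon
    exact h (Finset.prod_eq_zero (mem_intBox.2 hm) (clamp_of_nonpos (by linarith)))
  have hmark : ∀ i ∈ intBox k I, ∀ x, ω i x ≠ 0 → α x ≠ 0 := by
    intro i hi x h h0
    rw [mem_intBox] at hi
    obtain ⟨n, hn, hαn⟩ := hL (T (fun j => N * i j) x)
    rw [← hT.map_add] at hαn
    set m : Fin k → ℤ := n + fun j => N * i j with hmdef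
    have hmj : ∀ j, |m j| ≤ N * I + L := by
      intro j
      have h1 := hn j
      have h2 : |(N : ℤ) * i j| ≤ N * I := by
        rw [abs_mul, Nat.abs_cast]; gcongr; exact hi j
      have h3 := abs_add_le (n j) (N * i j)
      simp only [hmdef, Pi.add_apply]; linarith
    have h1 := hωS i x h m (fun j => by
      have := hmj j
      have h5 : (0 : ℤ) ≤ N * I := by positivity
      simp only [L2]; push_cast; linarith)
    have h2 : stepCost N i m ≤ k * ((L : ℤ) ^ 2 + 2 * N * (N * I + L)) := by
      have : ∀ j ∈ Finset.univ, (m j) ^ 2 - 2 * N * i j * m j + 2 * N * |m j| ≤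
          (L : ℤ) ^ 2 + 2 * N * (N * I + L) := by
        intro j _
        have h3 : (m j) ^ 2 - 2 * N * i j * m j = (n j) ^ 2 - (N * i j) ^ 2 := by
          simp only [hmdef, Pi.add_apply]; ring
        have h4 : (n j) ^ 2 ≤ (L : ℤ) ^ 2 := sq_le_sq' (by linarith [abs_le.1 (hn j)])
          (abs_le.1 (hn j)).2
        have h5 : 2 * (N : ℤ) * |m j| ≤ 2 * N * (N * I + L) := by gcongr; exact hmj j
        rw [h3]
        nlinarith [sq_nonneg ((N : ℤ) * i j)]
      have := Finset.sum_le_card_nsmul _ _ _ this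
      simpa [stepCost] using this
    have h3 : (stepCost N i m : ℝ) ≤ k * ((L : ℝ) ^ 2 + 2 * N * (N * I + L)) := by
      exact_mod_cast h2
    simp only [S, c] at h1
    rw [hαn, h0] at h1
    simp only [C] at h1
    linarith
  refine ⟨intBox k I, ω, ?_, ?_, ?_, ?_, ?_, ?_⟩
  · intro i
    refine continuous_finsetProd _ fun m _ => continuous_clamp.comp ?_
    exact continuous_const.add ((continuous_const.add (hcc.comp (hT.cont m))).sub hcc)
  · exact fun i x => Finset.prod_nonneg fun m _ => clamp_nonneg _
  · exact fun i x => Finset.prod_le_one (fun m _ => clamp_nonneg _) fun m _ => clamp_le_one _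
  · intro x y hxy i
    have h0 := hxy 0
    rw [hT.map_zero, hT.map_zero] at h0
    simp only [ω, S, c, hxy, h0]
  · intro x m i hi i' hi' h1 h2 hm
    have hm0 : m = 0 := by
      by_contra hne
      have hbig : ∃ j, (P : ℤ) < |m j| := by
        by_contra hcon
        push Not at hcon
        exact hne (hsep x m (hmark i hi x h1) (hmark i' hi' _ h2) hcon)
      have hsum := stepCost_add_le hP hm hbig
      have hmL : ∀ j, |m j| ≤ (L2 : ℤ) := by
        intro j
        have h3 := mem_intBox.1 hi j
        have h4 := mem_intBox.1 hi' j
        have h5 : |(q : ℤ) * (i' j - i j)| ≤ N * (2 * I) := by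
          rw [abs_mul, Nat.abs_cast]
          have h6 : |i' j - i j| ≤ 2 * I := (abs_sub _ _).trans (by linarith)
          have h7 : (q : ℤ) ≤ N := by omega
          gcongr
        have h6 : |m j| ≤ |m j + q * (i' j - i j)| + |(q : ℤ) * (i' j - i j)| := by
          have := abs_sub (m j + q * (i' j - i j)) (q * (i' j - i j))
          rwa [add_sub_cancel_right] at this
        have h7 := hm j
        simp only [L2]; push_cast
        have h8 : (N : ℤ) = q + 1 := by simp [hN]
        have : (0 : ℤ) ≤ L := by positivity
        linarith
      have s1 := hωS i x h1 m hmL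
      have s2 := hωS i' (T m x) h2 (-m) (fun j => by rw [Pi.neg_apply, abs_neg]; exact hmL j)
      simp only [S] at s1 s2
      rw [hT.neg_apply] at s2
      have : (stepCost N i m : ℝ) + stepCost N i' (-m) ≤ -2 := by exact_mod_cast hsum
      linarith
    refine ⟨hm0, funext fun j => ?_⟩
    have h3 := hm j
    rw [hm0, Pi.zero_apply, zero_add, abs_mul, Nat.abs_cast] at h3
    have h4 : |i' j - i j| < 1 := by
      by_contra hcon
      push Not at hcon
      have : (0 : ℤ) ≤ q := by positivity
      nlinarith
    exact sub_eq_zero.1 (Int.abs_lt_one_iff.1 h4)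
  · intro x
    -- the tile containing the origin belongs to the position of least weighted distance
    let Q : (Fin k → ℤ) → ℝ := fun n => ((∑ j, (n j) ^ 2 : ℤ) : ℝ) + c (T n x)
    let L3 : ℕ := k * L + L2
    obtain ⟨n, -, hmin⟩ := Finset.exists_min_image (intBox k L3) Q ⟨0, mem_intBox.2 (by simp)⟩
    obtain ⟨n0, hn0, hα0⟩ := hL x
    have hQ0 : Q n0 ≤ ((k * L ^ 2 : ℤ) : ℝ) := by
      have h1 : ∑ j, (n0 j) ^ 2 ≤ (k * L ^ 2 : ℤ) := by
        have := Finset.sum_le_card_nsmul Finset.univ (fun j => (n0 j) ^ 2) ((L : ℤ) ^ 2)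
          (fun j _ => sq_le_sq' (by linarith [abs_le.1 (hn0 j)]) (abs_le.1 (hn0 j)).2)
        simpa using this
      simp only [Q, c, hα0, sub_self, mul_zero, add_zero]
      exact_mod_cast h1
    have hQn : ∑ j, (n j) ^ 2 ≤ (k * L ^ 2 : ℤ) := by
      have h1 := hmin n0 (mem_intBox.2 fun j => (hn0 j).trans (by
        have h3 : L ≤ L3 := by simp only [L3, L2]; omega
        exact_mod_cast h3))
      have h2 := hc0 (T n x)
      have : ((∑ j, (n j) ^ 2 : ℤ) : ℝ) ≤ ((k * L ^ 2 : ℤ) : ℝ) := by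
        simp only [Q] at h1 hQ0
        linarith
      exact_mod_cast this
    have hnj : ∀ j, |n j| ≤ (k * L : ℤ) := by
      intro j
      have hk : (1 : ℤ) ≤ k := by have := j.pos; omega
      have h1 := Finset.single_le_sum (f := fun j => (n j) ^ 2) (fun j _ => sq_nonneg _)
        (Finset.mem_univ j)
      have h2 : (n j) ^ 2 ≤ (k * L : ℤ) ^ 2 := by
        have : (k * L ^ 2 : ℤ) ≤ (k * L : ℤ) ^ 2 := by nlinarith [sq_nonneg (L : ℤ)]
        exact h1.trans (hQn.trans this)
      exact abs_le_of_sq_le_sq h2 (by positivity)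
    have hNpos : (0 : ℤ) < N := by omega
    let i : Fin k → ℤ := fun j => (-n j) / N
    have he : ∀ j, n j + N * i j = -((-n j) % N) := by
      intro j
      have := Int.emod_add_mul_ediv (-n j) N
      simp only [i]; linarith
    have he1 : ∀ j, -(N : ℤ) < n j + N * i j ∧ n j + N * i j ≤ 0 := by
      intro j
      rw [he]
      have h1 := Int.emod_nonneg (-n j) hNpos.ne'
      have h2 := Int.emod_lt_of_pos (-n j) hNpos
      constructor <;> linarith
    refine ⟨n, i, ?_, ?_, ?_⟩
    · refine mem_intBox.2 fun j => ?_
      have h1 := he1 j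
      have h2 := abs_le.1 (hnj j)
      simp only [I]; push_cast
      have h3 : (0 : ℤ) ≤ k * L := by positivity
      rw [abs_le]
      constructor <;> nlinarith
    · refine Finset.prod_eq_one fun m hm => clamp_of_one_le ?_
      rw [mem_intBox] at hm
      have h1 := hmin (n + m) (mem_intBox.2 fun j => by
        refine (abs_add_le _ _).trans ?_
        have := hnj j
        have := hm j
        simp only [L3]; push_cast; linarith)
      have h2 : ∑ j, ((n + m) j) ^ 2 - ∑ j, (n j) ^ 2 ≤ stepCost N i m := by
        rw [← Finset.sum_sub_distrib]
        refine Finset.sum_le_sum fun j _ => ?_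
        have h3 := he1 j
        have h4 : (n j + N * i j) * m j ≤ N * |m j| := by
          calc (n j + N * i j) * m j ≤ |(n j + N * i j) * m j| := le_abs_self _
            _ = |n j + N * i j| * |m j| := abs_mul _ _
            _ ≤ N * |m j| := by
              gcongr
              rw [abs_le]; constructor <;> linarith
        rw [Pi.add_apply]
        nlinarith
      have h3 : ((∑ j, ((n + m) j) ^ 2 : ℤ) : ℝ) - ((∑ j, (n j) ^ 2 : ℤ) : ℝ) ≤ stepCost N i m := by
        exact_mod_cast h2
      simp only [Q] at h1
      have e : T (n + m) x = T m (T n x) := by rw [add_comm, hT.map_add]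
      rw [e] at h1
      simp only [S]
      linarith
    · intro j
      have := he1 j
      rw [hN] at this
      push_cast at this
      exact this

/-! ### Separating perturbations -/

/-- Any two maps `X → ℝ^D` have arbitrarily small perturbations that, read jointly along orbits,
separate points at distance at least `ε`. The perturbation of the first map makes a marker function
readable; the perturbation of the second writes the block codes into the cells that the marker
function determines. -/
lemma exists_separating_perturbation {k D : ℕ} (hk : 1 ≤ k) {X : Type*} [MetricSpace X]
    [CompactSpace X] (T : (Fin k → ℤ) → X → X) (hT : IsZkAction T) (hmarker : MarkerProperty T)
    (hmdim : mdim X T < (D : ℝ≥0∞) / 2 ^ (k + 1)) {f₁ f₂ : X → Fin D → ℝ}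
    (hf₁ : Continuous f₁) (hf₂ : Continuous f₂) {δ ε : ℝ} (hδ : 0 < δ) (hε : 0 < ε) :
    ∃ g₁ g₂ : X → Fin D → ℝ, Continuous g₁ ∧ Continuous g₂ ∧
      (∀ x d, |g₁ x d - f₁ x d| < δ) ∧ (∀ x d, |g₂ x d - f₂ x d| < δ) ∧
      ∀ x y, (∀ n, g₁ (T n x) = g₁ (T n y)) → (∀ n, g₂ (T n x) = g₂ (T n y)) → dist x y < ε := by
  classical
  obtain ⟨ε₁, hε₁, hmod⟩ := exists_modulus hf₂ (half_pos hδ)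
  obtain ⟨N, M, h, hN, hc, hnn, hsum, hsmall, hcard⟩ :=
    exists_block_cover hk T hT hmdim (lt_min hε hε₁) 1
  obtain ⟨q, rfl⟩ : ∃ q, N = q + 1 := ⟨N - 1, by omega⟩
  obtain ⟨g₁, α, L, hg₁, hg₁f, hαc, hα0, hα1, hαsep, hαL, hαg⟩ :=
    exists_recognizable_markers hk T hT hmarker hmdim hf₁ hδ
      (5 * k * (q + 1) ^ 4 + 3 * (q + 1) ^ 2 + 2 * (q + 1))
  obtain ⟨I, ω, hωc, hω0, hω1, hωα, hωsep, hωcov⟩ :=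
    exists_cell_weights hT q _ rfl hαc hα1 hαsep hαL
  -- the profile of the code word of `v`
  let B : Fin M → (Fin k → ℤ) → Fin D → ℝ := fun v s d =>
    if hx : ∃ x, h v x ≠ 0 then f₂ (T s hx.choose) d else 0
  have hB : ∀ (v : Fin M) (y : X) (s : Fin k → Fin q) (d : Fin D), h v y ≠ 0 →
      |B v (offset s) d - f₂ (T (offset s) y) d| < δ / 2 := by
    intro v y s d hy
    have hx : ∃ x, h v x ≠ 0 := ⟨y, hy⟩
    simp only [B, dif_pos hx]
    refine hmod _ _ ((hsmall v _ _ hx.choose_spec hy (offset s) fun i => ?_).trans_le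
      (min_le_right _ _)) d
    have := offset_bounds s i
    push_cast
    omega
  obtain ⟨e, -⟩ := exists_row_equiv k D q
  let node : Fin M ⊕ Fin M → ℤ := Sum.elim (fun v => ((v : ℕ) : ℤ)) (fun v => M + ((v : ℕ) : ℤ))
  have hnode : Function.Injective node := by
    rintro (v | v) (w | w) hvw
    · simp only [node, Sum.elim_inl] at hvw
      exact congrArg Sum.inl (Fin.ext (by omega))
    · simp only [node, Sum.elim_inl, Sum.elim_inr] at hvw
      omega
    · simp only [node, Sum.elim_inl, Sum.elim_inr] at hvw
      omega
    · simp only [node, Sum.elim_inr] at hvw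
      exact congrArg Sum.inr (Fin.ext (by omega))
  let E : Fin M ⊕ Fin M → (Fin k → Fin q) × Fin D → ℝ := fun c r =>
    (2 : ℝ) ^ ((((e r : ℕ) : ℤ) - node c) ^ 2)
  have hE : ∀ c r, 0 < E c r := fun c r => by positivity
  let B' : Fin M ⊕ Fin M → (Fin k → Fin q) × Fin D → ℝ := Sum.elim
    (fun v r => B v (offset r.1) r.2) (fun _ _ => 0)
  let Emax : ℝ := 1 + ∑ c, ∑ r, E c r
  have hEmax : ∀ c r, E c r ≤ Emax := by
    intro c r
    have h1 := Finset.single_le_sum (f := fun r => E c r) (fun r _ => (hE _ _).le)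
      (Finset.mem_univ r)
    have h2 := Finset.single_le_sum (f := fun c => ∑ r, E c r)
      (fun c _ => Finset.sum_nonneg fun r _ => (hE _ _).le) (Finset.mem_univ c)
    simp only [Emax] at h1 h2 ⊢
    linarith
  have hEpos : 0 < Emax := by
    have : 0 ≤ ∑ c, ∑ r, E c r :=
      Finset.sum_nonneg fun c _ => Finset.sum_nonneg fun r _ => (hE _ _).le
    simp only [Emax]; linarith
  obtain ⟨t, ht0, htτ, htgood⟩ := exists_good_param (J := Unit) _
    (fun _ => code_finite_bad_equiv _ e B' node hnode) (τ := δ / 4 / Emax) (by positivity)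
  have htE : ∀ c r, t * E c r < δ / 4 := fun c r => by
    calc t * E c r ≤ t * Emax := mul_le_mul_of_nonneg_left (hEmax c r) ht0.le
      _ < δ / 4 / Emax * Emax := mul_lt_mul_of_pos_right htτ hEpos
      _ = δ / 4 := div_mul_cancel₀ _ hEpos.ne'
  have htE0 : ∀ c r, 0 < t * E c r := fun c r => mul_pos ht0 (hE c r)
  -- the code of the block at `(q + 1) i` is written in the cell at `q i`
  let site : (Fin k → ℤ) → Fin k → ℤ := fun i j => q * i j
  let block : (Fin k → ℤ) → Fin k → ℤ := fun i j => (q + 1) * i j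
  let H : (Fin k → ℤ) → X → Fin M ⊕ Fin M → ℝ := fun i x => Sum.elim
    (fun v => h v (T (site i) x)) (fun v => h v (T (block i) x))
  have hHc : ∀ i c, Continuous fun x => H i x c := by
    rintro i (v | v)
    · exact (hc v).comp (hT.cont _)
    · exact (hc v).comp (hT.cont _)
  let pos : I × (Fin k → Fin q) → Fin k → ℤ := fun p => site p.1 + offset p.2
  let code : X → Fin D → I × (Fin k → Fin q) → ℝ := fun x d p =>
    ∑ c, H p.1 (T (-pos p) x) c * (B' c (p.2, d) + t * E c (p.2, d))
  let g₂ : X → Fin D → ℝ := fun x d =>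
    f₂ x d + ∑ p, ω p.1 (T (-pos p) x) * (code x d p - f₂ x d)
  have hone : ∀ x, ∀ p p' : I × (Fin k → Fin q), ω p.1 (T (-pos p) x) ≠ 0 →
      ω p'.1 (T (-pos p') x) ≠ 0 → p = p' := by
    rintro x ⟨i, s⟩ ⟨i', s'⟩ h1 h2
    have h3 : T (-pos (i', s')) x = T (pos (i, s) - pos (i', s')) (T (-pos (i, s)) x) := by
      rw [← hT.map_add]; congr 1; abel
    rw [h3] at h2
    obtain ⟨h4, h5⟩ := hωsep _ _ i.1 i.2 i'.1 i'.2 h1 h2 (fun j => by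
      have h6 := offset_bounds s j
      have h7 := offset_bounds s' j
      have : (pos (i, s) - pos (i', s')) j + q * (i'.1 j - i.1 j) = offset s j - offset s' j := by
        simp only [pos, site, Pi.sub_apply, Pi.add_apply]; ring
      rw [this, abs_lt]; omega)
    have h6 : i' = i := Subtype.ext h5
    subst h6
    have h7 : offset s = offset s' := by
      have := sub_eq_zero.1 h4
      exact add_left_cancel this
    rw [offset_injective h7]
  have hg₂ : Continuous g₂ := by
    refine continuous_pi fun d => ?_
    have hfd : Continuous fun x => f₂ x d := (continuous_apply d).comp hf₂
    refine hfd.add (continuous_finsetSum _ fun p _ => ?_)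
    refine ((hωc _).comp (hT.cont _)).mul (Continuous.sub ?_ hfd)
    exact continuous_finsetSum _ fun c _ => ((hHc _ c).comp (hT.cont _)).mul continuous_const
  have hg₂f : ∀ x d, |g₂ x d - f₂ x d| < δ := by
    intro x d
    refine overwrite_close hδ (hone x) (fun p => hω0 _ _) (fun p => hω1 _ _) ?_
    rintro ⟨i, s⟩ -
    set y := T (-pos (i, s)) x with hy
    have hxy : T (offset s) (T (site i) y) = x := by
      rw [hy, ← hT.map_add, ← hT.map_add]
      have : offset s + site i + -pos (i, s) = 0 := by simp only [pos]; abel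
      rw [this, hT.map_zero]
    have h1 : |∑ v, h v (T (site i) y) * (B v (offset s) d + t * E (Sum.inl v) (s, d)) -
        f₂ x d| < 3 * δ / 4 := by
      refine convex_close (fun v => hnn v _) (hsum _) fun v hv => ?_
      have h2 := hB v _ s d hv
      rw [hxy] at h2
      have h3 := htE (Sum.inl v) (s, d)
      have h4 := htE0 (Sum.inl v) (s, d)
      rw [abs_lt] at h2 ⊢
      constructor <;> linarith
    have h2 : |∑ v, h v (T (block i) y) * (0 + t * E (Sum.inr v) (s, d)) - 0| < δ / 4 := by
      refine convex_close (fun v => hnn v _) (hsum _) fun v hv => ?_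
      have h3 := htE (Sum.inr v) (s, d)
      have h4 := htE0 (Sum.inr v) (s, d)
      rw [zero_add, sub_zero, abs_of_pos h4]
      exact h3
    have h3 : code x d (i, s) =
        ∑ v, h v (T (site i) y) * (B v (offset s) d + t * E (Sum.inl v) (s, d)) +
        ∑ v, h v (T (block i) y) * (0 + t * E (Sum.inr v) (s, d)) := by
      simp only [code]
      rw [Fintype.sum_sum_type]
      rfl
    rw [h3]
    rw [abs_lt] at h1 h2 ⊢
    constructor <;> linarith
  have hval : ∀ x, ∀ i ∈ I, ω i x = 1 → ∀ (s : Fin k → Fin q) (d : Fin D),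
      g₂ (T (site i + offset s) x) d =
        ∑ c, H i x c * (B' c (s, d) + t * E c (s, d)) := by
    intro x i hi hx s d
    have hp : T (-pos (⟨i, hi⟩, s)) (T (site i + offset s) x) = x := hT.neg_apply _ _
    simp only [g₂]
    rw [overwrite_eq (hone _) (i := (⟨i, hi⟩, s)) (by rw [hp, hx])]
    simp only [code]
    rw [hp]
  refine ⟨g₁, g₂, hg₁, hg₂, hg₁f, hg₂f, fun x y h1 h2 => ?_⟩
  have hα : ∀ n, α (T n x) = α (T n y) := fun n => hαg _ _ fun m => by
    rw [← hT.map_add, ← hT.map_add, h1]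
  obtain ⟨n, i, hi, hω, hcell⟩ := hωcov x
  have hω' : ω i (T n y) = 1 := by
    rw [← hω]
    refine (hωα _ _ (fun m => ?_) i).symm
    rw [← hT.map_add, ← hT.map_add, hα]
  have hgood := htgood ()
  simp only [Set.mem_ofPred_eq, not_not] at hgood
  have hz := hgood (fun c => H i (T n x) c - H i (T n y) c) (by
    have hsub : {c | H i (T n x) c - H i (T n y) c ≠ 0} ⊆
        (Sum.inl '' {v | h v (T (site i) (T n x)) ≠ 0} ∪
          Sum.inl '' {v | h v (T (site i) (T n y)) ≠ 0}) ∪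
        (Sum.inr '' {v | h v (T (block i) (T n x)) ≠ 0} ∪
          Sum.inr '' {v | h v (T (block i) (T n y)) ≠ 0}) := by
      rintro (v | v) hv
      · left
        by_cases hv1 : h v (T (site i) (T n x)) = 0
        · refine Or.inr ⟨v, fun hv2 => hv ?_, rfl⟩
          simp only [H, Sum.elim_inl, hv1, hv2, sub_zero]
        · exact Or.inl ⟨v, hv1, rfl⟩
      · right
        by_cases hv1 : h v (T (block i) (T n x)) = 0
        · refine Or.inr ⟨v, fun hv2 => hv ?_, rfl⟩
          simp only [H, Sum.elim_inr, hv1, hv2, sub_zero]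
        · exact Or.inl ⟨v, hv1, rfl⟩
    have hl : ∀ (u : Fin M → Fin M ⊕ Fin M) z,
        4 * (u '' {v | h v z ≠ 0}).ncard ≤ D * q ^ k := fun u z => by
      have h3 := Set.ncard_image_le (f := u) (Set.toFinite {v | h v z ≠ 0})
      have h4 := hcard z
      rw [Nat.add_sub_cancel] at h4
      omega
    have h3 := Set.ncard_le_ncard hsub (Set.toFinite _)
    have h4 := Set.ncard_union_le
      (Sum.inl '' {v | h v (T (site i) (T n x)) ≠ 0} ∪
          Sum.inl '' {v | h v (T (site i) (T n y)) ≠ 0} : Set (Fin M ⊕ Fin M))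
      (Sum.inr '' {v | h v (T (block i) (T n x)) ≠ 0} ∪
          Sum.inr '' {v | h v (T (block i) (T n y)) ≠ 0})
    have h5 := Set.ncard_union_le
      (Sum.inl '' {v | h v (T (site i) (T n x)) ≠ 0} : Set (Fin M ⊕ Fin M))
      (Sum.inl '' {v | h v (T (site i) (T n y)) ≠ 0})
    have h6 := Set.ncard_union_le
      (Sum.inr '' {v | h v (T (block i) (T n x)) ≠ 0} : Set (Fin M ⊕ Fin M))
      (Sum.inr '' {v | h v (T (block i) (T n y)) ≠ 0})
    have a1 := hl Sum.inl (T (site i) (T n x))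
    have a2 := hl Sum.inl (T (site i) (T n y))
    have a3 := hl Sum.inr (T (block i) (T n x))
    have a4 := hl Sum.inr (T (block i) (T n y))
    rw [mul_comm (q ^ k)]
    omega) (by
    rintro ⟨s, d⟩
    have e1 := hval (T n x) i hi hω s d
    have e2 := hval (T n y) i hi hω' s d
    rw [← hT.map_add] at e1 e2
    rw [h2, e2] at e1
    simp only [sub_mul]
    rw [Finset.sum_sub_distrib, sub_eq_zero]
    exact e1.symm)
  obtain ⟨v, hv⟩ : ∃ v, h v (T (block i) (T n x)) ≠ 0 := by
    by_contra! hcon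
    have := hsum (T (block i) (T n x))
    simp [hcon] at this
  have hv' : h v (T (block i) (T n y)) ≠ 0 := by
    have := sub_eq_zero.1 (congrFun hz (Sum.inr v))
    simp only [H, Sum.elim_inr] at this
    rwa [← this]
  -- the origin lies in the block, so the points of the orbits at the origin are `ε`-close
  have hd := hsmall v _ _ hv hv' (-(block i + n)) (fun j => by
    have := hcell j
    simp only [Pi.neg_apply, Pi.add_apply, block]
    push_cast
    constructor <;> linarith)
  rw [← hT.map_add (block i), ← hT.map_add (block i), hT.neg_apply, hT.neg_apply] at hd
  exact hd.trans_le (min_le_left _ _)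

/-! ### Baire category -/

/-- Maps whose orbit readings separate all points at distance at least `ε`. -/
def separatingMaps {k : ℕ} {X : Type*} [MetricSpace X] (T : (Fin k → ℤ) → X → X) (m : ℕ) (ε : ℝ) :
    Set C(X, Fin m → ℝ) :=
  {g | ∀ x y, (∀ n, g (T n x) = g (T n y)) → dist x y < ε}

lemma isOpen_separatingMaps {k : ℕ} {X : Type*} [MetricSpace X] [CompactSpace X]
    {T : (Fin k → ℤ) → X → X} (hT : IsZkAction T) (m : ℕ) (ε : ℝ) :
    IsOpen (separatingMaps T m ε) := by
  -- the complement is the projection of a closed set along the compact space `X × X`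
  let Z : Set (C(X, Fin m → ℝ) × (X × X)) :=
    {p | ε ≤ dist p.2.1 p.2.2 ∧ ∀ n, p.1 (T n p.2.1) = p.1 (T n p.2.2)}
  have hZ : IsClosed Z := by
    have hd : IsClosed {p : C(X, Fin m → ℝ) × (X × X) | ε ≤ dist p.2.1 p.2.2} :=
      isClosed_le continuous_const (by fun_prop)
    have hZ' : Z = {p | ε ≤ dist p.2.1 p.2.2} ∩ ⋂ n, {p | p.1 (T n p.2.1) = p.1 (T n p.2.2)} := by
      ext p
      simp only [Z, Set.mem_inter_iff, Set.mem_iInter, Set.mem_ofPred_eq]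
    rw [hZ']
    refine hd.inter ?_
    refine isClosed_iInter fun n => isClosed_eq ?_ ?_
    · have := hT.cont n
      fun_prop
    · have := hT.cont n
      fun_prop
  have hproj := isClosedMap_fst_of_compactSpace Z hZ
  have : separatingMaps T m ε = (Prod.fst '' Z)ᶜ := by
    ext g
    constructor
    · rintro hg ⟨⟨g', x, y⟩, ⟨h1, h2⟩, rfl⟩
      exact absurd (hg x y h2) (not_lt.2 h1)
    · intro hg x y hxy
      by_contra hcon
      exact hg ⟨(g, x, y), ⟨not_lt.1 hcon, hxy⟩, rfl⟩
  rw [this]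
  exact hproj.isOpen_compl

lemma dense_separatingMaps {k D : ℕ} (hk : 1 ≤ k) {X : Type*} [MetricSpace X]
    [CompactSpace X] (T : (Fin k → ℤ) → X → X) (hT : IsZkAction T) (hmarker : MarkerProperty T)
    (hmdim : mdim X T < (D : ℝ≥0∞) / 2 ^ (k + 1)) {ε : ℝ} (hε : 0 < ε) :
    Dense (separatingMaps T (2 * D) ε) := by
  obtain ⟨e⟩ : Nonempty (Fin D ⊕ Fin D ≃ Fin (2 * D)) :=
    ⟨Fintype.equivOfCardEq (by simp [two_mul])⟩
  intro f
  rw [Metric.mem_closure_iff]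
  intro δ hδ
  obtain ⟨g₁, g₂, hg₁, hg₂, h1, h2, hsep⟩ := exists_separating_perturbation hk T hT hmarker hmdim
    (f₁ := fun x d => f x (e (Sum.inl d))) (f₂ := fun x d => f x (e (Sum.inr d)))
    (by fun_prop) (by fun_prop) (half_pos hδ) hε
  have hg : Continuous fun (x : X) (c : Fin (2 * D)) => Sum.elim (g₁ x) (g₂ x) (e.symm c) := by
    refine continuous_pi fun c => ?_
    rcases e.symm c with d | d
    · exact (continuous_apply d).comp hg₁
    · exact (continuous_apply d).comp hg₂
  refine ⟨⟨_, hg⟩, ?_, ?_⟩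
  · intro x y hxy
    refine hsep x y (fun n => funext fun d => ?_) (fun n => funext fun d => ?_)
    · have := congrFun (hxy n) (e (Sum.inl d))
      simpa using this
    · have := congrFun (hxy n) (e (Sum.inr d))
      simpa using this
  · refine lt_of_le_of_lt ?_ (half_lt_self hδ)
    rw [ContinuousMap.dist_le (half_pos hδ).le]
    intro x
    rw [dist_pi_le_iff (half_pos hδ).le]
    intro c
    obtain ⟨c, rfl⟩ := e.surjective c
    rw [dist_comm, Real.dist_eq]
    rcases c with d | d
    · simpa using (h1 x d).le
    · simpa using (h2 x d).le

/-- **Theorem (embedding, marker property).** If a `ℤ^k`-system with the marker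
property satisfies `mdim(X) < D/2^{k+1}`, then it embeds equivariantly into the
shift on `([0,1]^{2D})^{ℤ^k}`. -/
theorem stmt_2 (k D : ℕ) (hk : 1 ≤ k) (hD : 1 ≤ D)
    (X : Type*) [MetricSpace X] [CompactSpace X]
    (T : (Fin k → ℤ) → X → X) (hT : IsZkAction T) (hmarker : MarkerProperty T)
    (hmdim : mdim X T < (D : ℝ≥0∞) / 2 ^ (k + 1)) :
    ∃ φ : X → ((Fin k → ℤ) → Fin (2 * D) → Set.Icc (0 : ℝ) 1),
      Topology.IsEmbedding φ ∧
      ∀ (g : Fin k → ℤ) (x : X), φ (T g x) = fun n => φ x (n + g) := by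
  have hdense : Dense (⋂ j : ℕ, separatingMaps T (2 * D) (1 / ((j : ℝ) + 1))) :=
    dense_iInter_of_isOpen_nat (fun j => isOpen_separatingMaps hT _ _)
      (fun j => dense_separatingMaps hk T hT hmarker hmdim Nat.one_div_pos_of_nat)
  obtain ⟨g, hg⟩ := hdense.nonempty
  rw [Set.mem_iInter] at hg
  have hinj : ∀ x y, (∀ n, g (T n x) = g (T n y)) → x = y := by
    intro x y hxy
    refine eq_of_forall_dist_le fun ε hε => ?_
    obtain ⟨j, hj⟩ := exists_nat_one_div_lt hε
    exact ((hg j x y hxy).trans hj).le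
  refine ⟨fun x n d => unitInterval.sigmoid (g (T n x) d), ?_, ?_⟩
  · refine (Continuous.isClosedEmbedding ?_ ?_).isEmbedding
    · refine continuous_pi fun n => continuous_pi fun d => ?_
      exact unitInterval.continuous_sigmoid.comp
        ((continuous_apply d).comp (g.continuous.comp (hT.cont n)))
    · intro x y hxy
      refine hinj x y fun n => funext fun d => ?_
      exact unitInterval.sigmoid_strictMono.injective (congrFun (congrFun hxy n) d)
  · intro a x
    funext n d
    simp only [hT.map_add]
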